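/- Let D = (P,𝓑) be a symmetric 2-(v,k,λ) design and let G be a flag-transitive automorphism group of D that is a Frobenius permutation group on P (transitive, not regular, and every non-identity element fixes at most one point). Then: |G| is odd; G acts primitively on P and primitively on 𝓑; G acts regularly on the set of flags (equivalently |G| = v·k); v = p^d for an odd prime p and there is a bijection from P to the Galois field GF(p^d) under which every element of G acts as t ↦ a·σ(t) + b with a ≠ 0, b ∈ GF(p^d) and σ a field automorphism of GF(p^d) (that is, G ≤ AΓL_1(v)); and for every block B ∈ 𝓑 there exists a point x ∈ P∖B such that G_B = G_x. -/

import Mathlib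

/-!
A flag-transitive Frobenius group `G` on a symmetric design is a subgroup of `AΓL₁(v)`.

*Blocks and points.* The incidence matrix of a symmetric design is invertible and intertwines the
two permutation representations, so every `g` fixes as many blocks as points
(`IsDesign.card_fixed`). Hence every non-identity element of `G_B` fixes exactly one point, and a
counting argument (`exists_global_fixedPoint`) makes this the same point `z` for all of them:
`G_B = G_z`, and `z ∉ B` by flag-transitivity. It follows that `|G_x| = k`, `|G| = v k` and that
`G` is flag-regular. As `G_x` acts freely on the other points, `k ∣ v - 1`, and `v < k ^ 2`; no
proper divisor `c > 1` of `v` satisfies `k ∣ c - 1`, which gives primitivity on points and,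
through the bijection `B ↦ z`, on blocks.

*The kernel.* Frobenius's theorem (`exists_frobeniusKernel`) is proved by showing that the average
of the set of the identity and the fixed-point-free elements is an idempotent of `ℂ[G]`. The
arithmetic of `k ∣ v - 1`, `v < k ^ 2` leaves no room for proper subgroups of the kernel normalized
by a point stabilizer, so the kernel is elementary abelian of order `v = p ^ d`
(`kernel_elementary_abelian`).

*Parity.* If `k` were even, an involution of `G_B` would pair off the blocks through `y` and `t y`,
and `λ` would be both odd and even (`odd_blockSize`). If `p = 2`, any two points are interchanged by
an element of the kernel, so the incidence matrix is symmetric with zero diagonal; its trace modulo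
a prime divisor of `k - λ` gives a contradiction (`not_transitive_involutions`).

*Semilinearity.* Let `V` be the kernel as a space over `F_p`, and `H` a point stabilizer: it has odd
order, acts freely on `V \ {0}`, and `|V| < |H| ^ 2`. Abelian subgroups of `H` are cyclic, so
the Sylow subgroups of `H` are cyclic and `H` has a normal self-centralizing cyclic subgroup `⟨a⟩`
(`exists_selfCentralizing_zpowers`). The eigenvalues of `a` are closed under `x ↦ x ^ p` and under
the exponents `j` of `h * a * h⁻¹ = a ^ j`; counting them against `|V| < |H| ^ 2` forces these
exponents to be powers of `p` modulo the order of `a` (`exists_conj_eq_pow_prime_pow`). So `F_p[a]`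
is a field `F` on which `H` acts by automorphisms, every `h ∈ H` is `F`-semilinear on `V`, and an
argument in the style of Hilbert 90 produces an `F`-line stable under `H`
(`exists_semilinear_eigenvector`). By the minimality of the kernel this line is all of `V`, so `V`
is identified with `F` and `G` acts by maps `t ↦ a σ(t) + b`.
-/

open scoped Pointwise

/-- A group action is primitive if it is transitive and every block is trivial
(this is the usual notion of a primitive permutation group). -/
def IsPrimitiveAction (G X : Type*) [Group G] [MulAction G X] : Prop :=
  MulAction.IsPretransitive G X ∧
    ∀ B : Set X, MulAction.IsBlock G B → B.Subsingleton ∨ B = Set.univ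

variable {P : Type*} [Fintype P] [DecidableEq P]

/-- `𝓑` is the block set of a (non-trivial) 2-design with parameters `(v, k, lam)`
on the point set `P`. -/
structure IsDesign (𝓑 : Finset (Finset P)) (v k lam : ℕ) : Prop where
  card_points : Fintype.card P = v
  blocks_card : ∀ B ∈ 𝓑, B.card = k
  two_lt_k : 2 < k
  k_lt_v : k < v - 1
  lam_pos : 0 < lam
  pair_blocks : ∀ x y : P, x ≠ y → (𝓑.filter fun B => x ∈ B ∧ y ∈ B).card = lam

/-- `G` is an automorphism group of the design with block set `𝓑`:
every element of `G` maps blocks to blocks. -/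
def IsAutGroup (G : Subgroup (Equiv.Perm P)) (𝓑 : Finset (Finset P)) : Prop :=
  ∀ g ∈ G, ∀ B ∈ 𝓑, g • B ∈ 𝓑

/-- `G` acts transitively on the flags of the design with block set `𝓑`. -/
def IsFlagTransitive (G : Subgroup (Equiv.Perm P)) (𝓑 : Finset (Finset P)) : Prop :=
  ∀ B₁ ∈ 𝓑, ∀ B₂ ∈ 𝓑, ∀ x₁ ∈ B₁, ∀ x₂ ∈ B₂, ∃ g ∈ G, g • x₁ = x₂ ∧ g • B₁ = B₂

/-- `G` acts transitively on the blocks of the design with block set `𝓑`. -/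
def IsBlockTransitive (G : Subgroup (Equiv.Perm P)) (𝓑 : Finset (Finset P)) : Prop :=
  ∀ B₁ ∈ 𝓑, ∀ B₂ ∈ 𝓑, ∃ g ∈ G, g • B₁ = B₂

/-- `G ≤ AΓL₁(v)`: the points can be identified with a finite field `F` in such a way
that every element of `G` acts as a semilinear affine map `t ↦ a • σ(t) + b`. -/
def ActsSemilinearlyOn {P : Type*} (G : Subgroup (Equiv.Perm P)) (F : Type) [Field F] : Prop :=
  ∃ e : P ≃ F, ∀ g : G, ∃ (a b : F) (σ : F ≃+* F), a ≠ 0 ∧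
    ∀ x : P, e (g • x) = a * σ (e x) + b

/-! ### Characters of Frobenius groups -/

open scoped ComplexOrder in
/-- A complex representation of a finite group preserves the positive definite Hermitian form
`M = ∑ h, A hᴴ * A h`, so `A g⁻¹` is conjugate to the adjoint of `A g`. -/
theorem char_inv_eq_conj {G V : Type*} [Group G] [Finite G] [AddCommGroup V] [Module ℂ V]
    [FiniteDimensional ℂ V] (ρ : Representation ℂ G V) (g : G) :
    ρ.character g⁻¹ = starRingEnd ℂ (ρ.character g) := by
  classical
  have := Fintype.ofFinite G
  let b := Module.finBasis ℂ V
  let A : G → Matrix _ _ ℂ := fun h => LinearMap.toMatrix b b (ρ h)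
  have hA : ∀ x y, A (x * y) = A x * A y := fun x y => by
    simp only [A, map_mul]
    exact LinearMap.toMatrix_mul b _ _
  have hA1 : A 1 = 1 := by simp [A]
  have htr : ∀ h, ρ.character h = (A h).trace := fun h =>
    LinearMap.trace_eq_matrix_trace ℂ b (ρ h)
  let M := ∑ h, (A h).conjTranspose * A h
  have hM : M.PosDef := by
    have h1 : M = 1 + ∑ h ∈ Finset.univ.erase (1 : G), (A h).conjTranspose * A h := by
      simp only [M]
      rw [← Finset.add_sum_erase _ _ (Finset.mem_univ (1 : G)), hA1]
      simp
    rw [h1]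
    exact Matrix.PosDef.one.add_posSemidef
      (Matrix.posSemidef_sum _ fun i _ => Matrix.posSemidef_conjTranspose_mul_self _)
  have hinv : (A g).conjTranspose * M * A g = M := by
    simp only [M, Finset.mul_sum, Finset.sum_mul]
    rw [← Equiv.sum_comp (Equiv.mulRight g) (fun h => (A h).conjTranspose * A h)]
    refine Finset.sum_congr rfl fun h _ => ?_
    simp only [Equiv.coe_mulRight, hA, Matrix.conjTranspose_mul, Matrix.mul_assoc]
  have hMu : IsUnit M.det := hM.isUnit.map Matrix.detMonoidHom
  have hgg : A g * A g⁻¹ = 1 := by rw [← hA, mul_inv_cancel, hA1]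
  have h2 : M * A g⁻¹ = (A g).conjTranspose * M := by
    conv_lhs => rw [← hinv]
    rw [Matrix.mul_assoc, hgg, Matrix.mul_one]
  have h3 : A g⁻¹ = M⁻¹ * ((A g).conjTranspose * M) := by
    rw [← h2, Matrix.nonsing_inv_mul_cancel_left _ _ hMu]
  rw [htr, htr, h3, Matrix.trace_mul_comm, Matrix.mul_assoc, Matrix.mul_nonsing_inv _ hMu,
    Matrix.mul_one, Matrix.trace_conjTranspose]
  rfl

section FrobeniusKernel

variable {G P : Type*} [Group G] [MulAction G P]

/-- The identity together with the elements of `G` without fixed points on `P`; for a Frobenius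
group this set is the Frobenius kernel. -/
def frobeniusSet (G P : Type*) [Group G] [MulAction G P] : Set G :=
  {g | g = 1 ∨ ∀ x : P, g • x ≠ x}

theorem frobeniusSet_conj {g : G} (hg : g ∈ frobeniusSet G P) (h : G) :
    h * g * h⁻¹ ∈ frobeniusSet G P := by
  rcases hg with rfl | hg
  · left; simp
  · right
    intro x hx
    apply hg (h⁻¹ • x)
    rw [mul_smul, mul_smul] at hx
    rw [eq_inv_smul_iff, hx]

theorem exists_fixed_of_notMem_frobeniusSet {g : G} (hg : g ∉ frobeniusSet G P) :
    g ≠ 1 ∧ ∃ x : P, g • x = x := by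
  simpa [frobeniusSet, not_or] using hg

theorem smul_ne_of_mem_frobeniusSet {g : G} (hg : g ∈ frobeniusSet G P) (h1 : g ≠ 1) (x : P) :
    g • x ≠ x := hg.resolve_left h1 x

open Classical in
/-- The elements with a fixed point are partitioned, apart from `1`, by the point stabilizers, all
of them conjugate; this splits the sum of a class function over `G`. -/
theorem sum_class_function [Fintype G] [Fintype P] [MulAction.IsPretransitive G P]
    (hfrob : ∀ g : G, g ≠ 1 → ∀ x y : P, g • x = x → g • y = y → x = y)
    (x₀ : P) {R : Type*} [CommRing R] (f : G → R) (hf : ∀ g h, f (h * g * h⁻¹) = f g) :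
    ∑ g, f g = ∑ g with g ∈ frobeniusSet G P, f g +
      Fintype.card P * ((∑ h : MulAction.stabilizer G x₀, f h) - f 1) := by
  have hpt : ∀ x : P, ∑ g with g ≠ 1 ∧ g • x = x, f g =
      (∑ h : MulAction.stabilizer G x₀, f h) - f 1 := by
    intro x
    obtain ⟨t, rfl⟩ := MulAction.exists_smul_eq G x₀ x
    have h1 : ∑ h : MulAction.stabilizer G x₀, f h = ∑ g with g • x₀ = x₀, f g := by
      rw [← Finset.sum_subtype_eq_sum_filter, Finset.subtype_univ]
      rfl
    have h2 : ∑ g with g • x₀ = x₀, f g = f 1 + ∑ g with g ≠ 1 ∧ g • x₀ = x₀, f g := by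
      rw [← Finset.add_sum_erase _ _ (a := (1 : G)) (by simp)]
      congr 2
      ext g; simp
    rw [h1, h2, add_sub_cancel_left]
    refine Finset.sum_bij' (fun g _ => t⁻¹ * g * t) (fun g _ => t * g * t⁻¹) ?_ ?_ ?_ ?_ ?_
    · intro g hg
      simp only [Finset.mem_filter, Finset.mem_univ, true_and] at hg ⊢
      refine ⟨fun h => hg.1 ?_, ?_⟩
      · have : g = t * (t⁻¹ * g * t) * t⁻¹ := by group
        rw [this, h]; simp
      · rw [mul_smul, mul_smul, hg.2, inv_smul_smul]
    · intro g hg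
      simp only [Finset.mem_filter, Finset.mem_univ, true_and] at hg ⊢
      refine ⟨fun h => hg.1 (by simpa using h), ?_⟩
      rw [mul_smul, inv_smul_smul, mul_smul, hg.2]
    · intro g _; group
    · intro g _; group
    · intro g _
      conv_rhs => rw [← hf _ t]
      congr 1; group
  have h3 : ∑ x : P, ∑ g with g ≠ 1 ∧ g • x = x, f g = ∑ g with g ∉ frobeniusSet G P, f g := by
    rw [Finset.sum_comm' (t' := Finset.univ.filter fun g => g ∉ frobeniusSet G P)
      (s' := fun g => Finset.univ.filter fun x => g • x = x)]
    · refine Finset.sum_congr rfl fun g hg => ?_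
      obtain ⟨h1, x, hx⟩ := exists_fixed_of_notMem_frobeniusSet (Finset.mem_filter.1 hg).2
      have : (Finset.univ.filter fun y : P => g • y = y) = {x} := by
        ext y
        simp only [Finset.mem_filter, Finset.mem_univ, true_and, Finset.mem_singleton]
        exact ⟨fun hy => hfrob g h1 _ _ hy hx, fun h => h ▸ hx⟩
      rw [this, Finset.sum_singleton]
    · intro x g
      simp only [Finset.mem_univ, Finset.mem_filter, true_and]
      constructor
      · rintro ⟨h1, h2⟩
        exact ⟨h2, fun h => smul_ne_of_mem_frobeniusSet h h1 x h2⟩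
      · rintro ⟨h1, h2⟩
        exact ⟨(exists_fixed_of_notMem_frobeniusSet h2).1, h1⟩
  rw [← Finset.sum_filter_add_sum_filter_not Finset.univ (fun g => g ∈ frobeniusSet G P) f,
    ← h3, Finset.sum_congr rfl fun x _ => hpt x, Finset.sum_const, nsmul_eq_mul, Finset.card_univ]

open Classical in
theorem card_frobeniusSet [Finite G] [Finite P] [Nonempty P] [MulAction.IsPretransitive G P]
    (hfrob : ∀ g : G, g ≠ 1 → ∀ x y : P, g • x = x → g • y = y → x = y) :
    Nat.card (frobeniusSet G P) = Nat.card P := by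
  have := Fintype.ofFinite G
  have := Fintype.ofFinite P
  obtain ⟨x₀⟩ := ‹Nonempty P›
  have h := sum_class_function hfrob x₀ (fun _ => (1 : ℤ)) (by simp)
  have hc := MulAction.card_orbit_mul_card_stabilizer_eq_card_group G x₀
  have hc2 : Fintype.card (MulAction.orbit G x₀) = Fintype.card P := by
    exact Fintype.card_congr
      ((Equiv.setCongr (MulAction.orbit_eq_univ G x₀)).trans (Equiv.Set.univ P))
  rw [hc2] at hc
  simp only [Finset.sum_const, Finset.card_univ, nsmul_eq_mul, mul_one, ← hc] at h
  have h4 : Nat.card (frobeniusSet G P) = (Finset.univ.filter fun g => g ∈ frobeniusSet G P).card := by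
    rw [Nat.card_eq_fintype_card, Fintype.card_subtype]
  rw [h4, Nat.card_eq_fintype_card]
  zify
  push_cast at h
  linarith

open Classical in
/-- For an irreducible character `χ` of degree `d`, let `c` be its mean over the Frobenius set. With
`r = ⟨χ|_H, 1⟩` and `N = ⟨χ|_H, χ|_H⟩` one finds `c = d - k r`, and the variance of `χ` over the
set is `k (1 - Q)` for the integer `Q = N - 2 d r + k r ^ 2`. Since `c ^ 2 ≤ k Q`, either `Q = 0`
and the mean vanishes, or `Q = 1` and `χ` is constant on the set. -/
theorem irreducible_frobeniusSet {V : Type*} [Fintype G] [Fintype P] [Nonempty P]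
    [MulAction.IsPretransitive G P]
    (hfrob : ∀ g : G, g ≠ 1 → ∀ x y : P, g • x = x → g • y = y → x = y)
    [AddCommGroup V] [Module ℂ V] [FiniteDimensional ℂ V]
    (ρ : Representation ℂ G V) [ρ.IsIrreducible] :
    ∑ g with g ∈ frobeniusSet G P, ρ.character g = 0 ∨
      ∀ g ∈ frobeniusSet G P, ρ.character g = Module.finrank ℂ V := by
  -- If `ρ` has a nonzero invariant vector it is trivial.
  by_cases ht : ∃ w : V, w ≠ 0 ∧ ∀ g, ρ g w = w
  · right
    obtain ⟨w, hw0, hw⟩ := ht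
    let U : Subrepresentation ρ := ⟨ρ.invariants, fun g w hw => by rw [hw g]; exact hw⟩
    have hU : U = ⊤ := by
      refine (eq_bot_or_eq_top U).resolve_left fun h => hw0 ?_
      have : w ∈ U := hw
      rw [h] at this
      exact this
    intro g _
    have hg : ρ g = 1 := by
      ext w
      have : w ∈ U := hU ▸ trivial
      exact this g
    rw [Representation.character, hg, LinearMap.trace_one]
  obtain ⟨x₀⟩ := ‹Nonempty P›
  set H := MulAction.stabilizer G x₀
  set v : ℝ := (Fintype.card P : ℝ) with hvdef
  have hv : 0 < v := by
    have : Nonempty P := ⟨x₀⟩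
    simpa [v] using Fintype.card_pos (α := P)
  set d := Module.finrank ℂ V
  have : Invertible (Nat.card G : ℂ) := invertibleOfNonzero (by simp)
  have : Invertible (Nat.card H : ℂ) := invertibleOfNonzero (by simp)
  set k := Nat.card H
  have hk : 0 < k := Nat.card_pos
  let σ : Representation ℂ H V := ρ.comp H.subtype
  set r := Module.finrank ℂ σ.invariants
  set N := Module.finrank ℂ (Representation.IntertwiningMap σ σ)
  let S := Finset.univ.filter fun g : G => g ∈ frobeniusSet G P
  have hkC : (k : ℂ) ≠ 0 := by exact_mod_cast hk.ne'
  have hX : ∑ h : H, ρ.character h = k * r := by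
    have := Representation.card_inv_mul_sum_char_eq_finrank σ
    rw [inv_mul_eq_iff_eq_mul₀ hkC] at this
    exact this
  have hG : (Nat.card G : ℂ) = v * k := by
    have hc := MulAction.card_orbit_mul_card_stabilizer_eq_card_group G x₀
    have hc2 : Fintype.card (MulAction.orbit G x₀) = Fintype.card P :=
      Fintype.card_congr
        ((Equiv.setCongr (MulAction.orbit_eq_univ G x₀)).trans (Equiv.Set.univ P))
    rw [hc2] at hc
    simp only [v, k, Nat.card_eq_fintype_card, ← hc]
    push_cast
    rfl
  have hsq : ∀ {K : Subgroup G} (h : K), ρ.character h * ρ.character (h : G)⁻¹ =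
      (Complex.normSq (ρ.character h) : ℂ) := fun h => by
    rw [char_inv_eq_conj, Complex.mul_conj]
  have hY : ∑ h : H, Complex.normSq (ρ.character h) = k * N := by
    have := Representation.card_inv_mul_sum_char_mul_char_eq_finrank σ σ
    rw [inv_mul_eq_iff_eq_mul₀ hkC] at this
    have h2 : ((∑ h : H, Complex.normSq (ρ.character h) : ℝ) : ℂ) = k * N := by
      rw [← this]
      push_cast
      exact Finset.sum_congr rfl fun h _ => (hsq h).symm
    exact_mod_cast h2
  have hGG : ∑ g, Complex.normSq (ρ.character g) = v * k := by
    have := Representation.char_orthonormal ρ ρ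
    rw [inv_mul_eq_iff_eq_mul₀ (by simp), if_pos ⟨Representation.Equiv.refl ρ⟩, mul_one, hG] at this
    have h2 : ((∑ g, Complex.normSq (ρ.character g) : ℝ) : ℂ) = v * k := by
      rw [← this]
      push_cast
      exact Finset.sum_congr rfl fun h _ => (hsq (K := ⊤) ⟨h, trivial⟩).symm
    exact_mod_cast h2
  have hG1 : ∑ g, ρ.character g = 0 := by
    have := Representation.card_inv_mul_sum_char_eq_finrank ρ
    rw [inv_mul_eq_iff_eq_mul₀ (by simp)] at this
    rw [this]
    have : ρ.invariants = ⊥ := by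
      rw [eq_bot_iff]
      intro w hw
      by_contra h
      exact ht ⟨w, h, fun g => hw g⟩
    rw [this]; simp
  have hcl : ∀ g h, ρ.character (h * g * h⁻¹) = ρ.character g := fun g h => ρ.char_conj g h
  have e1 := sum_class_function hfrob x₀ ρ.character hcl
  have e2 := sum_class_function hfrob x₀ (fun g => Complex.normSq (ρ.character g))
    (fun g h => by rw [hcl])
  rw [hG1, hX, ρ.char_one] at e1
  simp only [hGG, ρ.char_one] at e2
  have hScard : (S.card : ℝ) = v := by
    have := @card_frobeniusSet G P _ _ _ _ ⟨x₀⟩ _ hfrob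
    rw [Nat.card_eq_fintype_card, Nat.card_eq_fintype_card, Fintype.card_subtype] at this
    simp only [v, S, ← this]
  set c : ℝ := (d : ℝ) - k * r with hc
  have hS1 : ∑ g ∈ S, ρ.character g = v * c := by
    simp only [v, c]
    push_cast
    linear_combination -e1
  have hS2 : ∑ g ∈ S, Complex.normSq (ρ.character g) = v * (k - k * N + d ^ 2) := by
    have : Complex.normSq (d : ℂ) = (d : ℝ) ^ 2 := by simp [Complex.normSq_apply, sq]
    rw [this] at e2
    rw [hY] at e2
    linear_combination -e2
  set Q : ℤ := (N : ℤ) - 2 * d * r + k * r ^ 2 with hQdef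
  have hdev : ∑ g ∈ S, Complex.normSq (ρ.character g - c) = v * k * (1 - Q) := by
    have h1 : ∀ g, Complex.normSq (ρ.character g - c) =
        Complex.normSq (ρ.character g) - 2 * c * (ρ.character g).re + c ^ 2 := fun g => by
      simp [Complex.normSq_apply]; ring
    have h2 : ∑ g ∈ S, (ρ.character g).re = v * c := by
      rw [← Complex.re_sum, hS1]; simp
    simp only [h1, Finset.sum_add_distrib, Finset.sum_sub_distrib, ← Finset.mul_sum, hS2, h2,
      Finset.sum_const, nsmul_eq_mul, hScard, Q, c]
    push_cast
    ring
  have hkR : (0 : ℝ) < k := by exact_mod_cast hk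
  have hQ1 : Q ≤ 1 := by
    have : 0 ≤ v * k * (1 - Q) := hdev ▸ Finset.sum_nonneg fun g _ => Complex.normSq_nonneg _
    have : (0 : ℝ) ≤ 1 - Q := nonneg_of_mul_nonneg_right this (by positivity)
    have : (Q : ℝ) ≤ 1 := by linarith
    exact_mod_cast this
  -- The term of the identity in `∑ h : H, |χ h| ^ 2 = k N`.
  have hd2 : (d : ℝ) ^ 2 ≤ k * N := by
    rw [← hY]
    have := Finset.single_le_sum (f := fun h : H => Complex.normSq (ρ.character h))
      (fun h _ => Complex.normSq_nonneg _) (Finset.mem_univ 1)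
    simpa [ρ.char_one, Complex.normSq_apply, sq] using this
  have hcQ : c ^ 2 ≤ k * Q := by
    simp only [Q, c]; push_cast; nlinarith
  have hQ0 : 0 ≤ Q := by
    have : (0 : ℝ) ≤ Q := nonneg_of_mul_nonneg_right ((sq_nonneg c).trans hcQ) hkR
    exact_mod_cast this
  obtain hQ | hQ : Q = 0 ∨ Q = 1 := by omega
  · left
    have : c = 0 := by
      rw [hQ] at hcQ; simpa using hcQ.antisymm (by simpa using sq_nonneg c)
    change ∑ g ∈ S, ρ.character g = 0
    rw [hS1, this]; simp
  · right
    rw [hQ] at hdev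
    have h0 : ∀ g ∈ S, ρ.character g = c := by
      intro g hg
      have := (Finset.sum_eq_zero_iff_of_nonneg fun g _ => Complex.normSq_nonneg _).1
        (hdev.trans (by simp)) g hg
      exact sub_eq_zero.1 (Complex.normSq_eq_zero.1 this)
    intro g hg
    rw [h0 g (by simpa [S] using hg), ← h0 1 (by simp only [S, Finset.mem_filter, Finset.mem_univ, true_and]; exact Or.inl rfl), ρ.char_one]

end FrobeniusKernel

/-! ### Frobenius's theorem -/

section OfModule
variable {G M : Type*} [Group G] [AddCommGroup M] [Module ℂ M] [Module (MonoidAlgebra ℂ G) M]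
  [IsScalarTower ℂ (MonoidAlgebra ℂ G) M]

/-- The action of `ℂ[G]` attached to the representation on a `ℂ[G]`-module is the given one. -/
theorem asAlgebraHom_ofModule' (r : MonoidAlgebra ℂ G) (x : M) :
    (Representation.ofModule' (k := ℂ) (G := G) M).asAlgebraHom r x = r • x := by
  simp [Representation.asAlgebraHom, Representation.ofModule']

/-- Simple `ℂ[G]`-modules give irreducible representations. -/
theorem irreducible_ofModule' [IsSimpleModule (MonoidAlgebra ℂ G) M] :
    (Representation.ofModule' (k := ℂ) (G := G) M).IsIrreducible := by
  rw [Representation.irreducible_iff_isSimpleModule_asModule]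
  let f : (Representation.ofModule' (k := ℂ) (G := G) M).asModule ≃ₗ[MonoidAlgebra ℂ G] M :=
    { (Representation.ofModule' (k := ℂ) (G := G) M).asModuleEquiv with
      map_smul' := fun r x => by
        change (Representation.ofModule' (k := ℂ) (G := G) M).asModuleEquiv (r • x) =
          r • (Representation.ofModule' (k := ℂ) (G := G) M).asModuleEquiv x
        rw [Representation.asModuleEquiv_map_smul, asAlgebraHom_ofModule'] }
  exact IsSimpleModule.congr f

end OfModule

section FrobeniusKernel
variable {G P : Type*} [Group G] [MulAction G P]

open Classical in
/-- The average of the Frobenius set in the group algebra. The normalization is by the number of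
points, which `card_frobeniusSet` shows to be the size of the set. -/
noncomputable def frobeniusIdem (G P : Type*) [Group G] [MulAction G P] [Fintype G] :
    MonoidAlgebra ℂ G :=
  ∑ g with g ∈ frobeniusSet G P, MonoidAlgebra.single g (Nat.card P : ℂ)⁻¹

open Classical in
/-- On an irreducible representation the averaged element acts as a scalar, by Schur's lemma, and
this scalar is `0` or `1` by `irreducible_frobeniusSet`. -/
theorem asAlgebraHom_frobeniusIdem {V : Type*} [Fintype G] [Fintype P] [Nonempty P]
    [MulAction.IsPretransitive G P]
    (hfrob : ∀ g : G, g ≠ 1 → ∀ x y : P, g • x = x → g • y = y → x = y)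
    [AddCommGroup V] [Module ℂ V] [FiniteDimensional ℂ V]
    (ρ : Representation ℂ G V) [ρ.IsIrreducible] :
    ρ.asAlgebraHom (frobeniusIdem G P * frobeniusIdem G P - frobeniusIdem G P) = 0 := by
  set c : ℂ := (Nat.card P : ℂ)⁻¹ with hc
  have hc0 : (Nat.card P : ℂ) ≠ 0 := by simp
  have hE : ρ.asAlgebraHom (frobeniusIdem G P) = c • ∑ g with g ∈ frobeniusSet G P, ρ g := by
    simp [frobeniusIdem, Representation.asAlgebraHom_single, Finset.smul_sum, hc]
  set E := ρ.asAlgebraHom (frobeniusIdem G P) with hEdef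
  have hcomm : ∀ (h : G) (w : V), E (ρ h w) = ρ h (E w) := by
    intro h w
    rw [hE]
    simp only [LinearMap.smul_apply, LinearMap.sum_apply, map_smul, map_sum]
    congr 1
    refine Finset.sum_bij' (fun g _ => h⁻¹ * g * h) (fun g _ => h * g * h⁻¹) ?_ ?_ ?_ ?_ ?_
    · intro g hg
      have := frobeniusSet_conj (Finset.mem_filter.1 hg).2 h⁻¹
      simpa using this
    · intro g hg
      have := frobeniusSet_conj (Finset.mem_filter.1 hg).2 h
      simpa using this
    · intro g _; group
    · intro g _; group
    · intro g _
      simp only [← Module.End.mul_apply, ← map_mul]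
      congr 2; group
  obtain ⟨ω, hω⟩ := (Representation.IsIrreducible.algebraMap_intertwiningMap_bijective_of_isAlgClosed
    (ρ := ρ)).2 (LinearMap.intertwiningMap_of_isIntertwiningMap ρ ρ E hcomm)
  have hEω : E = ω • 1 := by
    have := congrArg Representation.IntertwiningMap.toLinearMap hω
    ext w
    exact (LinearMap.congr_fun this w).symm
  have htr : ω * Module.finrank ℂ V = c * ∑ g with g ∈ frobeniusSet G P, ρ.character g := by
    have h1 := congrArg (LinearMap.trace ℂ V) (hEω.symm.trans hE)
    simpa [Representation.character] using h1
  have hd : (Module.finrank ℂ V : ℂ) ≠ 0 := by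
    have : Nontrivial V := by
      have : Nontrivial (Subrepresentation ρ) := inferInstance
      obtain ⟨a, b, hab⟩ := this
      by_contra hn
      rw [not_nontrivial_iff_subsingleton] at hn
      apply hab
      ext x
      rw [Subsingleton.elim x 0]
      exact ⟨fun _ => b.toSubmodule.zero_mem, fun _ => a.toSubmodule.zero_mem⟩
    exact_mod_cast Module.finrank_pos.ne'
  have hω01 : ω * ω = ω := by
    rcases irreducible_frobeniusSet hfrob ρ with h | h
    · rw [h, mul_zero] at htr
      simp [(mul_eq_zero.1 htr).resolve_right hd]
    · have hcard : ((Finset.univ.filter fun g => g ∈ frobeniusSet G P).card : ℂ) = Nat.card P := by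
        rw [← card_frobeniusSet hfrob, Nat.card_eq_fintype_card, Fintype.card_subtype]
      rw [Finset.sum_congr rfl fun g hg => h g (Finset.mem_filter.1 hg).2, Finset.sum_const,
        nsmul_eq_mul, hcard, hc, inv_mul_cancel_left₀ hc0] at htr
      rw [mul_right_cancel₀ hd (htr.trans (one_mul _).symm), one_mul]
  rw [map_sub, map_mul, ← hEdef, hEω, smul_mul_smul_comm, one_mul, hω01, sub_self]

open Classical in
/-- The defect of idempotency annihilates every simple module, so it lies in the Jacobson radical of
the semisimple algebra `ℂ[G]`. -/
theorem frobeniusIdem_mul_self [Fintype G] [Fintype P] [Nonempty P] [MulAction.IsPretransitive G P]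
    (hfrob : ∀ g : G, g ≠ 1 → ∀ x y : P, g • x = x → g • y = y → x = y) :
    frobeniusIdem G P * frobeniusIdem G P = frobeniusIdem G P := by
  rw [← sub_eq_zero]
  set z := frobeniusIdem G P * frobeniusIdem G P - frobeniusIdem G P with hz
  have : NeZero (Nat.card G : ℂ) := ⟨by simp⟩
  have hmem : z ∈ Ring.jacobson (MonoidAlgebra ℂ G) := by
    rw [Ring.jacobson, Module.jacobson, Submodule.mem_sInf]
    intro I hI
    have : IsSimpleModule (MonoidAlgebra ℂ G) (MonoidAlgebra ℂ G ⧸ I) :=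
      isSimpleModule_iff_isCoatom.2 hI
    have hirr := irreducible_ofModule' (G := G) (M := MonoidAlgebra ℂ G ⧸ I)
    have : Module.Finite ℂ (MonoidAlgebra ℂ G) :=
      Module.Finite.equiv (MonoidAlgebra.coeffLinearEquiv (S := ℂ) (M := G) ℂ).symm
    have : FiniteDimensional ℂ (MonoidAlgebra ℂ G ⧸ I) :=
      Module.Finite.trans (MonoidAlgebra ℂ G) _
    have h1 := asAlgebraHom_ofModule' (M := MonoidAlgebra ℂ G ⧸ I) z (Submodule.Quotient.mk 1)
    rw [asAlgebraHom_frobeniusIdem hfrob, LinearMap.zero_apply, eq_comm,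
      ← Submodule.Quotient.mk_smul, smul_eq_mul, mul_one, Submodule.Quotient.mk_eq_zero] at h1
    exact h1
  rw [IsSemisimpleRing.jacobson_eq_bot] at hmem
  exact hmem

open Classical in
/-- The coefficients of the square of the averaged element are non-negative, so no product of two
elements of the Frobenius set can lie outside the support of the average. -/
theorem mul_mem_frobeniusSet [Finite G] [Finite P] [Nonempty P] [MulAction.IsPretransitive G P]
    (hfrob : ∀ g : G, g ≠ 1 → ∀ x y : P, g • x = x → g • y = y → x = y)
    {a b : G} (ha : a ∈ frobeniusSet G P) (hb : b ∈ frobeniusSet G P) :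
    a * b ∈ frobeniusSet G P := by
  have := Fintype.ofFinite G
  have := Fintype.ofFinite P
  by_contra hab
  have h := frobeniusIdem_mul_self hfrob
  have h1 : (frobeniusIdem G P).coeff (a * b) = 0 := by
    rw [frobeniusIdem, MonoidAlgebra.coeff_sum, Finset.sum_apply']
    refine Finset.sum_eq_zero fun g hg => ?_
    rw [MonoidAlgebra.coeff_single, Finsupp.single_apply, if_neg]
    rintro rfl
    exact hab (Finset.mem_filter.1 hg).2
  rw [← h, frobeniusIdem, Finset.sum_mul] at h1
  simp only [Finset.mul_sum, MonoidAlgebra.coeff_sum, Finset.sum_apply',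
    MonoidAlgebra.single_mul_single, MonoidAlgebra.coeff_single, Finsupp.single_apply] at h1
  rw [← Finset.sum_product'] at h1
  set c : ℂ := (Nat.card P : ℂ)⁻¹ * (Nat.card P : ℂ)⁻¹
  have hc : c ≠ 0 := by simp [c]
  rw [← Finset.sum_filter, Finset.sum_const, smul_eq_zero] at h1
  have h2 := h1.resolve_right hc
  rw [Finset.card_eq_zero] at h2
  have : (a, b) ∈ (∅ : Finset (G × G)) := h2 ▸ by simp [ha, hb]
  simp at this

/-- The Frobenius kernel: the identity and the fixed-point-free elements, as a subgroup. -/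
def frobeniusKernel [Finite G] [Finite P] [Nonempty P] [MulAction.IsPretransitive G P]
    (hfrob : ∀ g : G, g ≠ 1 → ∀ x y : P, g • x = x → g • y = y → x = y) : Subgroup G where
  carrier := frobeniusSet G P
  mul_mem' := mul_mem_frobeniusSet hfrob
  one_mem' := Or.inl rfl
  inv_mem' := by
    rintro g (rfl | hg)
    · left; simp
    · right
      intro x hx
      exact hg x (inv_smul_eq_iff.1 hx).symm

/-- Frobenius's theorem: the kernel is a normal subgroup, of order the number of points. -/
theorem exists_frobeniusKernel [Finite G] [Finite P] [Nonempty P] [MulAction.IsPretransitive G P]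
    (hfrob : ∀ g : G, g ≠ 1 → ∀ x y : P, g • x = x → g • y = y → x = y) :
    ∃ K : Subgroup G, K.Normal ∧ Nat.card K = Nat.card P ∧
      ∀ g : G, g ∈ K ↔ g = 1 ∨ ∀ x : P, g • x ≠ x :=
  ⟨frobeniusKernel hfrob, ⟨fun _ hg h => frobeniusSet_conj hg h⟩, card_frobeniusSet hfrob,
    fun _ => Iff.rfl⟩
end FrobeniusKernel

/-! ### A common fixed point -/

section GlobalFixedPoint

open Classical in
/-- Send each non-identity element of `H` to its unique fixed point. The elements whose fixed point
lies in a given orbit `O` number `|H| - |O|`; if `O` contains such a fixed point, `|O| ≤ |H| / 2`.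
Two such orbits would account for at least `|H|` of the `|H| - 1` non-identity elements, so there is
just one, and it has length `1`. -/
theorem exists_global_fixedPoint {H X : Type*} [Group H] [Finite H] [Nontrivial H] [MulAction H X]
    [Finite X] (hfix : ∀ h : H, h ≠ 1 → ∃! x : X, h • x = x) : ∃ x : X, ∀ h : H, h • x = x := by
  have := Fintype.ofFinite H
  have := Fintype.ofFinite X
  obtain ⟨h₀, h₀1⟩ := exists_ne (1 : H)
  have : Nonempty X := ⟨(hfix h₀ h₀1).choose⟩
  choose! f hf hfu using hfix
  dsimp only at hf hfu
  let A : X → Finset H := fun x => {h | h ≠ 1 ∧ f h ∈ MulAction.orbit H x}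
  have hos : ∀ x : X, Nat.card (MulAction.orbit H x) * Nat.card (MulAction.stabilizer H x) =
      Nat.card H := fun x => by
    simp only [Nat.card_eq_fintype_card]
    exact MulAction.card_orbit_mul_card_stabilizer_eq_card_group H x
  -- Each point `y` of the orbit is the fixed point of `|H_y| - 1` non-identity elements.
  have hA : ∀ x, (A x).card + Nat.card (MulAction.orbit H x) = Nat.card H := by
    intro x
    let O : Finset X := (MulAction.orbit H x).toFinset
    have hO : Nat.card (MulAction.orbit H x) = O.card := by
      rw [Nat.card_eq_fintype_card, Set.toFinset_card]
    have h1 : (A x).card = ∑ y ∈ O, ((A x).filter fun h => f h = y).card :=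
      Finset.card_eq_sum_card_fiberwise fun h hh => by
        simpa [O] using (Finset.mem_filter.1 hh).2.2
    have h2 : ∀ y ∈ O, ((A x).filter fun h => f h = y).card + 1 =
        Nat.card (MulAction.stabilizer H x) := by
      intro y hy
      have hyx : y ∈ MulAction.orbit H x := by simpa [O] using hy
      have e1 : Nat.card (MulAction.stabilizer H x) = Nat.card (MulAction.stabilizer H y) := by
        have a1 := hos x
        have a2 := hos y
        rw [MulAction.orbit_eq_iff.2 hyx, ← a1] at a2
        exact (Nat.eq_of_mul_eq_mul_left (hO ▸ Finset.card_pos.2 ⟨y, hy⟩) a2).symm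
      have e2 : Nat.card (MulAction.stabilizer H y) =
          (Finset.univ.filter fun h : H => h • y = y).card := by
        rw [Nat.card_eq_fintype_card, Fintype.card_subtype]
        rfl
      rw [e1, e2, ← Finset.card_erase_add_one
        (s := Finset.univ.filter fun h : H => h • y = y) (a := (1 : H)) (by simp)]
      congr 2
      ext h
      simp only [Finset.mem_filter, Finset.mem_univ, true_and, Finset.mem_erase, A]
      constructor
      · rintro ⟨⟨h1, _⟩, rfl⟩
        exact ⟨h1, hf h h1⟩
      · rintro ⟨h1, h2⟩
        have := hfu h h1 y h2
        exact ⟨⟨h1, this ▸ hyx⟩, this.symm⟩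
    rw [h1, hO, Finset.card_eq_sum_ones, ← Finset.sum_add_distrib, Finset.sum_congr rfl h2,
      Finset.sum_const, smul_eq_mul, ← hO, hos]
  have hhalf : ∀ h : H, h ≠ 1 → 2 * Nat.card (MulAction.orbit H (f h)) ≤ Nat.card H := by
    intro h h1
    rw [← hos (f h), mul_comm]
    refine Nat.mul_le_mul_left _ ?_
    have : Nontrivial (MulAction.stabilizer H (f h)) :=
      ⟨⟨h, hf h h1⟩, 1, fun e => h1 (congrArg Subtype.val e)⟩
    have := Fintype.one_lt_card (α := MulAction.stabilizer H (f h))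
    rw [Nat.card_eq_fintype_card]
    exact this
  have hcardE : (Finset.univ.erase (1 : H)).card + 1 = Nat.card H := by
    rw [Finset.card_erase_add_one (Finset.mem_univ _), Finset.card_univ, Nat.card_eq_fintype_card]
  have hall : A (f h₀) = Finset.univ.erase 1 := by
    refine Finset.Subset.antisymm (fun h hh => by
      simpa using (Finset.mem_filter.1 hh).2.1) fun h hh => ?_
    by_contra hn
    have h1 : h ≠ 1 := by simpa using hh
    have hd : Disjoint (A (f h₀)) (A (f h)) := by
      rw [Finset.disjoint_left]
      intro g hg hg'
      have a1 := MulAction.orbit_eq_iff.2 (Finset.mem_filter.1 hg).2.2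
      have a2 := MulAction.orbit_eq_iff.2 (Finset.mem_filter.1 hg').2.2
      apply hn
      simp only [A, Finset.mem_filter, Finset.mem_univ, true_and]
      refine ⟨h1, ?_⟩
      rw [← a1, a2]
      exact MulAction.mem_orbit_self _
    have hsub : A (f h₀) ∪ A (f h) ⊆ Finset.univ.erase 1 := by
      intro g hg
      rcases Finset.mem_union.1 hg with hg | hg <;> simpa using (Finset.mem_filter.1 hg).2.1
    have hc := Finset.card_le_card hsub
    rw [Finset.card_union_of_disjoint hd] at hc
    have := hA (f h₀)
    have := hA (f h)
    have := hhalf h h1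
    have := hhalf h₀ h₀1
    omega
  have h1 : Nat.card (MulAction.orbit H (f h₀)) = 1 := by
    have := hA (f h₀)
    rw [hall] at this
    omega
  refine ⟨f h₀, fun h => ?_⟩
  have := (Nat.card_eq_one_iff_unique.1 h1).1
  exact congrArg Subtype.val (Subsingleton.elim
    (⟨h • f h₀, MulAction.mem_orbit _ _⟩ : MulAction.orbit H (f h₀))
    ⟨f h₀, MulAction.mem_orbit_self _⟩)
end GlobalFixedPoint

/-! ### Symmetric designs -/

section Design
variable {Ω : Type*} [Fintype Ω] [DecidableEq Ω]

/-- In a symmetric design every point lies in exactly `k` blocks. -/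
theorem IsDesign.replication {𝓑 : Finset (Finset Ω)} {v k lam : ℕ} (hD : IsDesign 𝓑 v k lam)
    (hsym : 𝓑.card = v) (x : Ω) : (𝓑.filter fun B => x ∈ B).card = k := by
  have h1 : ∀ x : Ω, (𝓑.filter fun B => x ∈ B).card * (k - 1) = (v - 1) * lam := by
    intro x
    have := Finset.sum_card_bipartiteAbove_eq_sum_card_bipartiteBelow
      (s := Finset.univ.erase x) (t := 𝓑.filter fun B => x ∈ B) (fun y B => y ∈ B)
    rw [Finset.sum_congr rfl (g := fun _ => lam), Finset.sum_const] at this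
    · rw [Finset.sum_congr rfl (g := fun _ => k - 1), Finset.sum_const] at this
      · rw [smul_eq_mul, smul_eq_mul, Finset.card_erase_of_mem (Finset.mem_univ _),
          Finset.card_univ, hD.card_points] at this
        exact this.symm
      · intro B hB
        obtain ⟨hB, hx⟩ := Finset.mem_filter.1 hB
        have : (Finset.univ.erase x).bipartiteBelow (fun y B => y ∈ B) B = B.erase x := by
          ext y
          simp [Finset.bipartiteBelow]
        rw [this, Finset.card_erase_of_mem hx, hD.blocks_card B hB]
    · intro y hy
      rw [← hD.pair_blocks x y (by simpa [eq_comm] using hy)]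
      congr 1
      ext B
      simp [Finset.bipartiteAbove, and_assoc]
  have h2 : ∑ y : Ω, (𝓑.filter fun B => y ∈ B).card = v * k := by
    have := Finset.sum_card_bipartiteAbove_eq_sum_card_bipartiteBelow
      (s := (Finset.univ : Finset Ω)) (t := 𝓑) (fun y B => y ∈ B)
    rw [Finset.sum_congr rfl (g := fun _ => k) (s₁ := 𝓑), Finset.sum_const, hsym] at this
    · exact this
    · intro B hB
      rw [← hD.blocks_card B hB]
      congr 1
      ext y; simp [Finset.bipartiteBelow]
  have h3 : ∀ y : Ω, (𝓑.filter fun B => y ∈ B).card = (𝓑.filter fun B => x ∈ B).card := fun y =>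
    Nat.eq_of_mul_eq_mul_right (by have := hD.two_lt_k; omega) ((h1 y).trans (h1 x).symm)
  rw [Finset.sum_congr rfl fun y _ => h3 y, Finset.sum_const, smul_eq_mul, Finset.card_univ,
    hD.card_points] at h2
  exact Nat.eq_of_mul_eq_mul_left (by have := hD.k_lt_v; omega) h2

/-- Double counting of the flags `(y, B)` with `y ≠ x` and `B` through a fixed point `x`. -/
theorem IsDesign.param_eq {𝓑 : Finset (Finset Ω)} {v k lam : ℕ} (hD : IsDesign 𝓑 v k lam)
    (hsym : 𝓑.card = v) : k * (k - 1) = lam * (v - 1) := by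
  have hv : 0 < Fintype.card Ω := by rw [hD.card_points]; have := hD.k_lt_v; omega
  obtain ⟨x⟩ := Fintype.card_pos_iff.1 hv
  have := Finset.sum_card_bipartiteAbove_eq_sum_card_bipartiteBelow
    (s := Finset.univ.erase x) (t := 𝓑.filter fun B => x ∈ B) (fun y B => y ∈ B)
  rw [Finset.sum_congr rfl (g := fun _ => lam), Finset.sum_const] at this
  · rw [Finset.sum_congr rfl (g := fun _ => k - 1), Finset.sum_const] at this
    · rw [smul_eq_mul, smul_eq_mul, Finset.card_erase_of_mem (Finset.mem_univ _),
        Finset.card_univ, hD.card_points, hD.replication hsym] at this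
      rw [← this, mul_comm]
    · intro B hB
      obtain ⟨hB, hx⟩ := Finset.mem_filter.1 hB
      have : (Finset.univ.erase x).bipartiteBelow (fun y B => y ∈ B) B = B.erase x := by
        ext y
        simp [Finset.bipartiteBelow]
      rw [this, Finset.card_erase_of_mem hx, hD.blocks_card B hB]
  · intro y hy
    rw [← hD.pair_blocks x y (by simpa [eq_comm] using hy)]
    congr 1
    ext B
    simp [Finset.bipartiteAbove, and_assoc]

theorem IsDesign.lam_lt {𝓑 : Finset (Finset Ω)} {v k lam : ℕ} (hD : IsDesign 𝓑 v k lam)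
    (hsym : 𝓑.card = v) : lam < k := by
  have h := hD.param_eq hsym
  have h1 := hD.k_lt_v
  have h2 := hD.two_lt_k
  by_contra hn
  have : k * (k - 1) < lam * (v - 1) := by
    calc k * (k - 1) ≤ lam * (k - 1) := Nat.mul_le_mul_right _ (by omega)
      _ < lam * (v - 1) := Nat.mul_lt_mul_of_pos_left (by omega) (by omega)
  omega

open Matrix in
/-- The incidence matrix `M` of a symmetric design is invertible, and `P_g M = M Q_g` for the
permutation matrices of an automorphism on points and on blocks; so `P_g` and `Q_g` have the same
trace. -/
theorem IsDesign.card_fixed {𝓑 : Finset (Finset Ω)} {v k lam : ℕ} (hD : IsDesign 𝓑 v k lam)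
    (hsym : 𝓑.card = v) (g : Equiv.Perm Ω) (σ : Equiv.Perm 𝓑)
    (hσ : ∀ (x : Ω) (B : 𝓑), g x ∈ (σ B : Finset Ω) ↔ x ∈ (B : Finset Ω)) :
    (Finset.univ.filter fun x => g x = x).card = (Finset.univ.filter fun B => σ B = B).card := by
  let M : Matrix Ω 𝓑 ℚ := Matrix.of fun x B => if x ∈ (B : Finset Ω) then 1 else 0
  let J : Matrix Ω Ω ℚ := Matrix.of fun _ _ => 1
  have hv := hD.k_lt_v
  have hk := hD.two_lt_k
  have hMM : M * Mᵀ = ((k : ℚ) - lam) • (1 : Matrix Ω Ω ℚ) + (lam : ℚ) • J := by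
    ext x y
    have : (M * Mᵀ) x y = ((𝓑.filter fun B => x ∈ B ∧ y ∈ B).card : ℚ) := by
      simp only [M, Matrix.mul_apply, Matrix.transpose_apply, Matrix.of_apply, mul_ite, mul_one,
        mul_zero, ← ite_and]
      rw [Finset.sum_coe_sort 𝓑 (fun B => if y ∈ B ∧ x ∈ B then (1 : ℚ) else 0),
        Finset.sum_boole]
      simp only [and_comm]
    rw [this]
    by_cases hxy : x = y
    · subst hxy
      simp only [and_self, hD.replication hsym]
      simp [J]
    · rw [hD.pair_blocks x y hxy]
      simp [J, hxy]
  have hJ : J * J = (v : ℚ) • J := by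
    ext x y
    simp [J, Matrix.mul_apply, hD.card_points]
  have hkl : (k : ℚ) - lam ≠ 0 := by
    have := hD.lam_lt hsym
    rw [sub_ne_zero]
    exact_mod_cast this.ne'
  have hpar : (k : ℚ) * (k - 1) = lam * (v - 1) := by
    have h := hD.param_eq hsym
    have : ((k * (k - 1) : ℕ) : ℚ) = ((lam * (v - 1) : ℕ) : ℚ) := by rw [h]
    push_cast [Nat.cast_sub (show 1 ≤ k by omega), Nat.cast_sub (show 1 ≤ v by omega)] at this
    exact this
  have hk0 : (k : ℚ) ≠ 0 := by
    have : k ≠ 0 := by omega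
    exact_mod_cast this
  -- The inverse of `M`, from `M Mᵀ = (k - λ) 1 + λ J` and `k - λ + λ v = k ^ 2`.
  let W : Matrix 𝓑 Ω ℚ := ((k : ℚ) - lam)⁻¹ • (Mᵀ * (1 - ((lam : ℚ) / k ^ 2) • J))
  have hMW : M * W = 1 := by
    have h1 : (((k : ℚ) - lam) • (1 : Matrix Ω Ω ℚ) + (lam : ℚ) • J) *
        (1 - ((lam : ℚ) / k ^ 2) • J) = ((k : ℚ) - lam) • (1 : Matrix Ω Ω ℚ) := by
      rw [Matrix.mul_sub, Matrix.mul_one, Matrix.mul_smul, Matrix.add_mul, Matrix.smul_mul,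
        Matrix.one_mul, Matrix.smul_mul, hJ, smul_smul, ← add_smul, smul_smul]
      have : (lam : ℚ) / k ^ 2 * (k - lam + lam * v) = lam := by
        have : (k : ℚ) - lam + lam * v = k ^ 2 := by linear_combination -hpar
        rw [this]; field_simp
      rw [this]; simp
    simp only [W]
    rw [Matrix.mul_smul, ← Matrix.mul_assoc, hMM, h1, smul_smul, inv_mul_cancel₀ hkl, one_smul]
  have hcard : Fintype.card Ω = Fintype.card 𝓑 := by
    rw [hD.card_points, Fintype.card_coe, hsym]
  have hWM : W * M = 1 := (Matrix.mul_eq_one_comm_of_card_eq Ω 𝓑 ℚ hcard).1 hMW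
  let Pg : Matrix Ω Ω ℚ := Matrix.of fun x y => if g x = y then 1 else 0
  let Qg : Matrix 𝓑 𝓑 ℚ := Matrix.of fun B C => if σ B = C then 1 else 0
  have hPQ : Pg * M = M * Qg := by
    ext x B
    have e1 : (Pg * M) x B = if g x ∈ (B : Finset Ω) then 1 else 0 := by
      simp [Pg, M, Matrix.mul_apply]
    have e2 : (M * Qg) x B = if x ∈ (σ.symm B : Finset Ω) then 1 else 0 := by
      simp only [M, Qg, Matrix.mul_apply, Matrix.of_apply]
      rw [Finset.sum_eq_single (σ.symm B)]
      · simp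
      · intro C _ hC
        rw [if_neg (c := σ C = B), mul_zero]
        rintro rfl
        simp at hC
      · simp
    rw [e1, e2]
    have := hσ x (σ.symm B)
    rw [Equiv.apply_symm_apply] at this
    simp only [this]
  have htr : Pg.trace = Qg.trace := by
    calc Pg.trace = (Pg * (M * W)).trace := by rw [hMW, Matrix.mul_one]
      _ = (M * Qg * W).trace := by rw [← Matrix.mul_assoc, hPQ]
      _ = (Qg * (W * M)).trace := by
        rw [Matrix.mul_assoc, Matrix.trace_mul_comm, Matrix.mul_assoc]
      _ = Qg.trace := by rw [hWM, Matrix.mul_one]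
  have : ((Finset.univ.filter fun x => g x = x).card : ℚ) =
      ((Finset.univ.filter fun B => σ B = B).card : ℚ) := by
    simpa [Matrix.trace, Pg, Qg, Finset.sum_boole] using htr
  exact_mod_cast this

end Design

/-! ### Block stabilizers and flag-regularity -/

/-- If `H` acts freely on the invariant set `S`, then `S` is a union of regular orbits. -/
theorem card_dvd_ncard_of_free {H X : Type*} [Group H] [MulAction H X] (S : Set X)
    (hS : ∀ (h : H), ∀ x ∈ S, h • x ∈ S) (hfree : ∀ h : H, h ≠ 1 → ∀ x ∈ S, h • x ≠ x) :
    Nat.card H ∣ S.ncard := by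
  let Y : SubMulAction H X := ⟨S, fun h {x} hx => hS h x hx⟩
  have hst : ∀ y : Y, MulAction.stabilizer H y = ⊥ := by
    intro y
    rw [eq_bot_iff]
    intro h hh
    by_contra hn
    exact hfree h hn y y.2 (congrArg Subtype.val hh)
  have e := Nat.card_congr (MulAction.selfEquivOrbitsQuotientProd hst)
  rw [Nat.card_prod] at e
  exact ⟨_, (show S.ncard = Nat.card Y from rfl).trans (e.trans (mul_comm _ _))⟩

section DesignGroup
variable {Ω : Type*} [Fintype Ω] [DecidableEq Ω]

/-- The action of a group of automorphisms on the blocks. -/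
@[reducible] def blockAction {G : Subgroup (Equiv.Perm Ω)} {𝓑 : Finset (Finset Ω)}
    (hAut : IsAutGroup G 𝓑) : MulAction G 𝓑 where
  smul g B := ⟨g • (B : Finset Ω), hAut g g.2 B B.2⟩
  one_smul B := Subtype.ext (one_smul _ (B : Finset Ω))
  mul_smul g h B := Subtype.ext (mul_smul g h (B : Finset Ω))

variable {𝓑 : Finset (Finset Ω)} {v k lam : ℕ} {G : Subgroup (Equiv.Perm Ω)}

theorem exists_fixed_of_smul_block (hD : IsDesign 𝓑 v k lam) (hsym : 𝓑.card = v)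
    (hAut : IsAutGroup G 𝓑) {g : G} {B : Finset Ω} (hB : B ∈ 𝓑) (hg : g • B = B) :
    ∃ x : Ω, g • x = x := by
  let _ := blockAction hAut
  have h := hD.card_fixed hsym (g : Equiv.Perm Ω) (MulAction.toPerm (β := 𝓑) g) fun x C => by
    exact Finset.smul_mem_smul_finset_iff (g : Equiv.Perm Ω)
  have h1 : 0 < (Finset.univ.filter fun C : 𝓑 => MulAction.toPerm (β := 𝓑) g C = C).card :=
    Finset.card_pos.2 ⟨⟨B, hB⟩, by simpa using Subtype.ext hg⟩
  rw [← h] at h1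
  obtain ⟨x, hx⟩ := Finset.card_pos.1 h1
  exact ⟨x, (Finset.mem_filter.1 hx).2⟩

/-- A non-identity element fixes at most one block, as it fixes at most one point. -/
theorem block_eq_of_fixed (hD : IsDesign 𝓑 v k lam) (hsym : 𝓑.card = v)
    (hAut : IsAutGroup G 𝓑)
    (hfrob : ∀ g : G, g ≠ 1 → ∀ x y : Ω, g • x = x → g • y = y → x = y)
    {g : G} (h1 : g ≠ 1) {B C : Finset Ω} (hB : B ∈ 𝓑) (hC : C ∈ 𝓑) (hgB : g • B = B)
    (hgC : g • C = C) : B = C := by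
  let _ := blockAction hAut
  have h := hD.card_fixed hsym (g : Equiv.Perm Ω) (MulAction.toPerm (β := 𝓑) g) fun x C => by
    exact Finset.smul_mem_smul_finset_iff (g : Equiv.Perm Ω)
  have h2 : (Finset.univ.filter fun x => (g : Equiv.Perm Ω) x = x).card ≤ 1 :=
    Finset.card_le_one.2 fun x hx y hy => hfrob g h1 x y (Finset.mem_filter.1 hx).2 (Finset.mem_filter.1 hy).2
  rw [h] at h2
  exact congrArg Subtype.val (Finset.card_le_one.1 h2 ⟨B, hB⟩ (by simpa using Subtype.ext hgB)
    ⟨C, hC⟩ (by simpa using Subtype.ext hgC))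

/-- `G` is transitive on the equally many points and blocks, so their stabilizers have the same
order. -/
theorem card_stabilizer_block (hD : IsDesign 𝓑 v k lam) (hsym : 𝓑.card = v)
    (hAut : IsAutGroup G 𝓑) (hflag : IsFlagTransitive G 𝓑)
    (htrans : MulAction.IsPretransitive G Ω) {B : Finset Ω} (hB : B ∈ 𝓑) (x : Ω) :
    Nat.card (MulAction.stabilizer G B) = Nat.card (MulAction.stabilizer G x) := by
  let _ := blockAction hAut
  have hne : ∀ C ∈ 𝓑, C.Nonempty := fun C hC => by
    rw [← Finset.card_pos, hD.blocks_card C hC]; have := hD.two_lt_k; omega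
  have htB : MulAction.IsPretransitive G 𝓑 := by
    refine ⟨fun C D => ?_⟩
    obtain ⟨c, hc⟩ := hne C C.2
    obtain ⟨d, hd⟩ := hne D D.2
    obtain ⟨g, hg, -, h⟩ := hflag C C.2 D D.2 c hc d hd
    exact ⟨⟨g, hg⟩, Subtype.ext h⟩
  have e1 := MulAction.index_stabilizer_of_transitive G x
  have e2 := MulAction.index_stabilizer_of_transitive G (⟨B, hB⟩ : 𝓑)
  have e3 : MulAction.stabilizer G (⟨B, hB⟩ : 𝓑) = MulAction.stabilizer G B := by
    ext g
    exact ⟨fun h => congrArg Subtype.val h, fun h => Subtype.ext h⟩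
  have hcard : Nat.card 𝓑 = Nat.card Ω := by
    rw [Nat.card_eq_fintype_card, Fintype.card_coe, hsym, Nat.card_eq_fintype_card, hD.card_points]
  rw [e3, hcard, ← e1] at e2
  have f1 := (MulAction.stabilizer G x).card_mul_index
  have f2 := (MulAction.stabilizer G B).card_mul_index
  rw [e2, ← f1] at f2
  exact Nat.eq_of_mul_eq_mul_right (Nat.pos_of_ne_zero Subgroup.index_ne_zero_of_finite) f2

/-- Every non-identity element of `G_B` fixes exactly one point, so `G_B` has a common fixed point
`z` and `G_B = G_z` by orders. Were `z` on `B`, flag-transitivity would let `G_B` move it. -/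
theorem exists_point_of_block (hD : IsDesign 𝓑 v k lam) (hsym : 𝓑.card = v)
    (hAut : IsAutGroup G 𝓑) (hflag : IsFlagTransitive G 𝓑)
    (htrans : MulAction.IsPretransitive G Ω)
    (hnonreg : ∃ g : G, g ≠ 1 ∧ ∃ x : Ω, g • x = x)
    (hfrob : ∀ g : G, g ≠ 1 → ∀ x y : Ω, g • x = x → g • y = y → x = y)
    {B : Finset Ω} (hB : B ∈ 𝓑) :
    ∃ z : Ω, z ∉ B ∧ MulAction.stabilizer G B = MulAction.stabilizer G z := by
  obtain ⟨g₀, hg₀, x₀, hx₀⟩ := hnonreg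
  have hnt : Nontrivial (MulAction.stabilizer G B) := by
    rw [← Finite.one_lt_card_iff_nontrivial, card_stabilizer_block hD hsym hAut hflag htrans hB x₀,
      Finite.one_lt_card_iff_nontrivial]
    exact ⟨⟨g₀, hx₀⟩, 1, fun h => hg₀ (congrArg Subtype.val h)⟩
  obtain ⟨z, hz⟩ := exists_global_fixedPoint (H := MulAction.stabilizer G B) (X := Ω) (by
    intro h h1
    have h1' : (h : G) ≠ 1 := fun e => h1 (Subtype.ext e)
    obtain ⟨x, hx⟩ := exists_fixed_of_smul_block hD hsym hAut hB h.2
    exact ⟨x, hx, fun y hy => hfrob h h1' y x hy hx⟩)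
  have heq : MulAction.stabilizer G B = MulAction.stabilizer G z :=
    Subgroup.eq_of_le_of_card_ge (fun g hg => hz ⟨g, hg⟩)
      (card_stabilizer_block hD hsym hAut hflag htrans hB z).ge
  refine ⟨z, fun hzB => ?_, heq⟩
  obtain ⟨y, hyB, hyz⟩ := Finset.exists_mem_ne
    (show 1 < B.card by rw [hD.blocks_card B hB]; have := hD.two_lt_k; omega) z
  obtain ⟨g, hg, h1, h2⟩ := hflag B hB B hB z hzB y hyB
  have : (⟨g, hg⟩ : G) ∈ MulAction.stabilizer G z := heq ▸ (show (⟨g, hg⟩ : G) ∈ _ from h2)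
  exact hyz (h1.symm.trans this)

/-- `G_B` acts regularly on the `k` points of `B`: transitively since `G` is flag-transitive, and
freely since its elements fix a point off `B`. -/
theorem card_stabilizer_eq (hD : IsDesign 𝓑 v k lam) (hsym : 𝓑.card = v)
    (hAut : IsAutGroup G 𝓑) (hflag : IsFlagTransitive G 𝓑)
    (htrans : MulAction.IsPretransitive G Ω)
    (hnonreg : ∃ g : G, g ≠ 1 ∧ ∃ x : Ω, g • x = x)
    (hfrob : ∀ g : G, g ≠ 1 → ∀ x y : Ω, g • x = x → g • y = y → x = y) (x : Ω) :
    Nat.card (MulAction.stabilizer G x) = k := by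
  have hne : 𝓑.Nonempty := by
    rw [← Finset.card_pos, hsym]; have := hD.k_lt_v; omega
  obtain ⟨B, hB⟩ := hne
  obtain ⟨z, hzB, hz⟩ := exists_point_of_block hD hsym hAut hflag htrans hnonreg hfrob hB
  rw [← card_stabilizer_block hD hsym hAut hflag htrans hB x, ← hD.blocks_card B hB,
    ← Nat.card_eq_finsetCard]
  obtain ⟨y, hy⟩ : B.Nonempty := by
    rw [← Finset.card_pos, hD.blocks_card B hB]; have := hD.two_lt_k; omega
  have hmem : ∀ g : MulAction.stabilizer G B, g • y ∈ B := fun g => by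
    have := Finset.smul_mem_smul_finset (a := (g : G)) hy
    rwa [show (g : G) • B = B from g.2] at this
  refine Nat.card_congr (Equiv.ofBijective (fun g => (⟨g • y, hmem g⟩ : B)) ⟨?_, ?_⟩)
  · intro g h hgh
    have h1 : (g : G) • y = (h : G) • y := congrArg Subtype.val hgh
    by_contra hn
    have hn' : (h : G)⁻¹ * g ≠ 1 := fun e => hn (Subtype.ext (inv_mul_eq_one.1 e).symm)
    have h2 : ((h : G)⁻¹ * g) • y = y := by rw [mul_smul, h1, inv_smul_smul]
    have h3 : (h : G)⁻¹ * g ∈ MulAction.stabilizer G z := hz ▸ (h⁻¹ * g).2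
    exact hzB (hfrob _ hn' _ _ h3 h2 ▸ hy)
  · intro w
    obtain ⟨g, hg, h1, h2⟩ := hflag B hB B hB y hy w w.2
    exact ⟨⟨⟨g, hg⟩, h2⟩, Subtype.ext h1⟩

theorem card_group_eq (hD : IsDesign 𝓑 v k lam) (hsym : 𝓑.card = v)
    (hAut : IsAutGroup G 𝓑) (hflag : IsFlagTransitive G 𝓑)
    (htrans : MulAction.IsPretransitive G Ω)
    (hnonreg : ∃ g : G, g ≠ 1 ∧ ∃ x : Ω, g • x = x)
    (hfrob : ∀ g : G, g ≠ 1 → ∀ x y : Ω, g • x = x → g • y = y → x = y) :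
    Nat.card G = v * k := by
  have hv : 0 < Fintype.card Ω := by rw [hD.card_points]; have := hD.k_lt_v; omega
  obtain ⟨x⟩ := Fintype.card_pos_iff.1 hv
  rw [← (MulAction.stabilizer G x).card_mul_index, MulAction.index_stabilizer_of_transitive G x,
    card_stabilizer_eq hD hsym hAut hflag htrans hnonreg hfrob, Nat.card_eq_fintype_card,
    hD.card_points, mul_comm]

theorem flag_regular (hD : IsDesign 𝓑 v k lam) (hsym : 𝓑.card = v)
    (hAut : IsAutGroup G 𝓑) (hflag : IsFlagTransitive G 𝓑)
    (htrans : MulAction.IsPretransitive G Ω)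
    (hnonreg : ∃ g : G, g ≠ 1 ∧ ∃ x : Ω, g • x = x)
    (hfrob : ∀ g : G, g ≠ 1 → ∀ x y : Ω, g • x = x → g • y = y → x = y) :
    ∀ B₁ ∈ 𝓑, ∀ B₂ ∈ 𝓑, ∀ x₁ ∈ B₁, ∀ x₂ ∈ B₂, ∃! g : G, g • x₁ = x₂ ∧ g • B₁ = B₂ := by
  intro B₁ hB₁ B₂ hB₂ x₁ hx₁ x₂ hx₂
  obtain ⟨g, hg, h1, h2⟩ := hflag B₁ hB₁ B₂ hB₂ x₁ hx₁ x₂ hx₂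
  refine ⟨⟨g, hg⟩, ⟨h1, h2⟩, ?_⟩
  rintro h ⟨h3, h4⟩
  by_contra hn
  obtain ⟨z, hzB, hz⟩ := exists_point_of_block hD hsym hAut hflag htrans hnonreg hfrob hB₁
  have e1 : ((⟨g, hg⟩ : G)⁻¹ * h) • x₁ = x₁ := by
    rw [mul_smul, h3, inv_smul_eq_iff]; exact h1.symm
  have e2 : ((⟨g, hg⟩ : G)⁻¹ * h) • B₁ = B₁ := by
    rw [mul_smul, h4, inv_smul_eq_iff]; exact h2.symm
  have e3 : (⟨g, hg⟩ : G)⁻¹ * h ∈ MulAction.stabilizer G z := hz ▸ e2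
  exact hzB (hfrob _ (fun e => hn (inv_mul_eq_one.1 e).symm) _ _ e3 e1 ▸ hx₁)

end DesignGroup

/-! ### Primitivity -/

/-- If `v = c m` with `k ∣ v - 1` and `k ∣ c - 1`, then `k ∣ m - 1` as well; if neither factor
is `1`, both are at least `k + 1`, which contradicts the size of `v`. -/
theorem eq_one_or_eq_of_dvd {v k c : ℕ} (hkv : k ∣ v - 1) (hv : v < (k + 1) ^ 2)
    (hv0 : 0 < v) (hc : c ∣ v) (hkc : k ∣ c - 1) : c = 1 ∨ c = v := by
  obtain ⟨m, rfl⟩ := hc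
  have hc0 : 0 < c := Nat.pos_of_mul_pos_right hv0
  have hm0 : 0 < m := Nat.pos_of_mul_pos_left hv0
  by_contra! hcon
  have hkm : k ∣ m - 1 := by
    have e : c * m - 1 = (c - 1) * m + (m - 1) := by
      obtain ⟨c, rfl⟩ : ∃ c', c = c' + 1 := ⟨c - 1, by omega⟩
      obtain ⟨m, rfl⟩ : ∃ m', m = m' + 1 := ⟨m - 1, by omega⟩
      have : (c + 1) * (m + 1) = c * (m + 1) + m + 1 := by ring
      simp only [Nat.add_sub_cancel]
      omega
    rw [e] at hkv
    exact (Nat.dvd_add_right (hkc.mul_right m)).1 hkv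
  have h1 : k ≤ c - 1 := Nat.le_of_dvd (by omega) hkc
  have h2 : k ≤ m - 1 := Nat.le_of_dvd (by
    rcases Nat.eq_or_lt_of_le hm0 with h | h
    · exact absurd (by rw [← h]; simp) hcon.2
    · omega) hkm
  have : (k + 1) * (k + 1) ≤ c * m := Nat.mul_le_mul (by omega) (by omega)
  rw [sq] at hv
  omega

section DesignGroup
variable {Ω : Type*} [Fintype Ω] [DecidableEq Ω]
variable {𝓑 : Finset (Finset Ω)} {v k lam : ℕ} {G : Subgroup (Equiv.Perm Ω)}

/-- A point stabilizer, of order `k`, acts freely on the remaining points. -/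
theorem dvd_sub_one (hD : IsDesign 𝓑 v k lam) (hsym : 𝓑.card = v)
    (hAut : IsAutGroup G 𝓑) (hflag : IsFlagTransitive G 𝓑)
    (htrans : MulAction.IsPretransitive G Ω)
    (hnonreg : ∃ g : G, g ≠ 1 ∧ ∃ x : Ω, g • x = x)
    (hfrob : ∀ g : G, g ≠ 1 → ∀ x y : Ω, g • x = x → g • y = y → x = y) : k ∣ v - 1 := by
  have hv : 0 < Fintype.card Ω := by rw [hD.card_points]; have := hD.k_lt_v; omega
  obtain ⟨x⟩ := Fintype.card_pos_iff.1 hv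
  have h := card_dvd_ncard_of_free (H := MulAction.stabilizer G x) ({x}ᶜ : Set Ω)
    (fun h y hy hy' => hy (by
      have e : (h : G) • y = (h : G) • x := hy'.trans h.2.symm
      exact smul_left_cancel _ e))
    (fun h h1 y hy hy' => hy (hfrob h (fun e => h1 (Subtype.ext e)) y x hy' h.2))
  rwa [card_stabilizer_eq hD hsym hAut hflag htrans hnonreg hfrob, Set.ncard_compl,
    Set.ncard_singleton, Nat.card_eq_fintype_card, hD.card_points] at h

/-- From `k (k - 1) = λ (v - 1)` and `λ ≥ 1`. -/
theorem IsDesign.lt_sq (hD : IsDesign 𝓑 v k lam) (hsym : 𝓑.card = v) (hkv : k ∣ v - 1) :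
    v < k ^ 2 := by
  have hp := hD.param_eq hsym
  have h1 := hD.k_lt_v
  have h2 := hD.two_lt_k
  have h3 := hD.lam_pos
  have : v - 1 ≤ k * (k - 1) := hp ▸ Nat.le_mul_of_pos_left _ h3
  obtain ⟨k, rfl⟩ : ∃ c', k = c' + 1 := ⟨k - 1, by omega⟩
  simp only [Nat.add_sub_cancel] at this
  have : v ≤ (k + 1) * k + 1 := by omega
  nlinarith

/-- For a block of imprimitivity `S ∋ x`, the stabilizer `G_x` acts freely on `S \ {x}`, so
`eq_one_or_eq_of_dvd` applies to `|S|`. -/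
theorem point_primitive (hD : IsDesign 𝓑 v k lam) (hsym : 𝓑.card = v)
    (hAut : IsAutGroup G 𝓑) (hflag : IsFlagTransitive G 𝓑)
    (htrans : MulAction.IsPretransitive G Ω)
    (hnonreg : ∃ g : G, g ≠ 1 ∧ ∃ x : Ω, g • x = x)
    (hfrob : ∀ g : G, g ≠ 1 → ∀ x y : Ω, g • x = x → g • y = y → x = y) :
    IsPrimitiveAction G Ω := by
  refine ⟨htrans, fun S hS => ?_⟩
  rcases S.eq_empty_or_nonempty with rfl | ⟨x, hx⟩
  · exact Or.inl Set.subsingleton_empty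
  have hkv := dvd_sub_one hD hsym hAut hflag htrans hnonreg hfrob
  have h1 : k ∣ S.ncard - 1 := by
    have h := card_dvd_ncard_of_free (H := MulAction.stabilizer G x) (S \ {x})
      (fun h y hy => by
        have e : h • S = S := hS.smul_eq_of_mem hx (by rw [show (h : G) • x = x from h.2]; exact hx)
        refine ⟨e ▸ Set.smul_mem_smul_set hy.1, fun hy' => hy.2 ?_⟩
        have e : (h : G) • y = (h : G) • x := Eq.trans hy' h.2.symm
        exact smul_left_cancel _ e)
      (fun h h1 y hy hy' => hy.2 (hfrob h (fun e => h1 (Subtype.ext e)) y x hy' h.2))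
    rwa [card_stabilizer_eq hD hsym hAut hflag htrans hnonreg hfrob,
      Set.ncard_sdiff_singleton_of_mem hx] at h
  have h2 := hS.ncard_dvd_card ⟨x, hx⟩
  rw [Nat.card_eq_fintype_card, hD.card_points] at h2
  have hk := hD.two_lt_k
  have hvk := hD.k_lt_v
  rcases eq_one_or_eq_of_dvd hkv ((hD.lt_sq hsym hkv).trans_le
    (Nat.pow_le_pow_left (by omega) 2)) (by omega) h2 h1 with h | h
  · left
    obtain ⟨a, rfl⟩ := Set.ncard_eq_one.1 h
    exact Set.subsingleton_singleton
  · right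
    rw [Set.eq_univ_iff_ncard, h, Nat.card_eq_fintype_card, hD.card_points]

/-- The map sending a block `B` to the point `z` with `G_B = G_z` is a `G`-equivariant bijection. -/
theorem exists_blockEquiv (hD : IsDesign 𝓑 v k lam) (hsym : 𝓑.card = v)
    (hAut : IsAutGroup G 𝓑) (hflag : IsFlagTransitive G 𝓑)
    (htrans : MulAction.IsPretransitive G Ω)
    (hnonreg : ∃ g : G, g ≠ 1 ∧ ∃ x : Ω, g • x = x)
    (hfrob : ∀ g : G, g ≠ 1 → ∀ x y : Ω, g • x = x → g • y = y → x = y) :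
    ∃ e : 𝓑 ≃ Ω, (∀ B : 𝓑, MulAction.stabilizer G (B : Finset Ω) = MulAction.stabilizer G (e B)) ∧
      (∀ B : 𝓑, e B ∉ (B : Finset Ω)) ∧
      ∀ (g : G) (B C : 𝓑), (C : Finset Ω) = g • (B : Finset Ω) → e C = g • e B := by
  choose z hz1 hz2 using fun B : 𝓑 =>
    exists_point_of_block hD hsym hAut hflag htrans hnonreg hfrob B.2
  have hcard : Fintype.card 𝓑 = Fintype.card Ω := by
    rw [Fintype.card_coe, hsym, hD.card_points]
  have hinj : Function.Injective z := by
    intro B C hBC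
    have hnt : Nontrivial (MulAction.stabilizer G (B : Finset Ω)) := by
      rw [← Finite.one_lt_card_iff_nontrivial, hz2,
        card_stabilizer_eq hD hsym hAut hflag htrans hnonreg hfrob]
      have := hD.two_lt_k
      omega
    obtain ⟨h, h1⟩ := exists_ne (1 : MulAction.stabilizer G (B : Finset Ω))
    have hC : (h : G) ∈ MulAction.stabilizer G (C : Finset Ω) := by
      rw [hz2, ← hBC, ← hz2]; exact h.2
    exact Subtype.ext (block_eq_of_fixed hD hsym hAut hfrob
      (fun e => h1 (Subtype.ext e)) B.2 C.2 h.2 hC)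
  refine ⟨Equiv.ofBijective z ((Fintype.bijective_iff_injective_and_card z).2 ⟨hinj, hcard⟩),
    hz2, hz1, fun g B C hC => ?_⟩
  have hnt : Nontrivial (MulAction.stabilizer G (z C)) := by
    rw [← Finite.one_lt_card_iff_nontrivial,
      card_stabilizer_eq hD hsym hAut hflag htrans hnonreg hfrob]
    have := hD.two_lt_k
    omega
  -- A non-identity element of `G_C = G_(z C)` fixes both `z C` and `g • z B`.
  obtain ⟨h, h1⟩ := exists_ne (1 : MulAction.stabilizer G (z C))
  have h2 : (h : G) ∈ MulAction.stabilizer G (C : Finset Ω) := by rw [hz2]; exact h.2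
  have h3 : g⁻¹ * h * g ∈ MulAction.stabilizer G (B : Finset Ω) := by
    rw [MulAction.mem_stabilizer_iff, hC] at h2
    rw [MulAction.mem_stabilizer_iff, mul_smul, mul_smul, h2, inv_smul_smul]
  rw [hz2, MulAction.mem_stabilizer_iff, mul_smul, mul_smul, inv_smul_eq_iff] at h3
  exact hfrob h (fun e => h1 (Subtype.ext e)) _ _ h.2 h3

theorem block_primitive (hD : IsDesign 𝓑 v k lam) (hsym : 𝓑.card = v)
    (hAut : IsAutGroup G 𝓑) (hflag : IsFlagTransitive G 𝓑)
    (htrans : MulAction.IsPretransitive G Ω)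
    (hnonreg : ∃ g : G, g ≠ 1 ∧ ∃ x : Ω, g • x = x)
    (hfrob : ∀ g : G, g ≠ 1 → ∀ x y : Ω, g • x = x → g • y = y → x = y) :
    ∃ ψ : G →* Equiv.Perm 𝓑,
      (∀ (g : G) (C : 𝓑), (ψ g C : Finset Ω) = g • (C : Finset Ω)) ∧
      IsPrimitiveAction ψ.range 𝓑 := by
  let _ := blockAction hAut
  obtain ⟨e, -, -, hge⟩ := exists_blockEquiv hD hsym hAut hflag htrans hnonreg hfrob
  let ψ : G →* Equiv.Perm 𝓑 := MulAction.toPermHom G 𝓑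
  have hψ : ∀ (g : G) (C : 𝓑), (ψ g C : Finset Ω) = g • (C : Finset Ω) := fun g C => rfl
  have heq : ∀ (g : G) (B : 𝓑), e (ψ g B) = g • e B := fun g B => hge g B _ (hψ g B)
  refine ⟨ψ, hψ, ⟨fun B C => ?_⟩, fun T hT => ?_⟩
  · obtain ⟨g, hg⟩ := htrans.exists_smul_eq (e B) (e C)
    exact ⟨⟨ψ g, g, rfl⟩, e.injective ((heq g B).trans hg)⟩
  · have hblk : MulAction.IsBlock G (e '' T) := by
      rw [MulAction.isBlock_iff_smul_eq_or_disjoint] at hT ⊢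
      intro g
      have e1 : g • e '' T = e '' ((⟨ψ g, g, rfl⟩ : ψ.range) • T) := by
        ext y
        constructor
        · rintro ⟨_, ⟨B, hB, rfl⟩, rfl⟩
          exact ⟨ψ g B, ⟨B, hB, rfl⟩, heq g B⟩
        · rintro ⟨_, ⟨B, hB, rfl⟩, rfl⟩
          exact ⟨e B, ⟨B, hB, rfl⟩, (heq g B).symm⟩
      rw [e1]
      rcases hT ⟨ψ g, g, rfl⟩ with h | h
      · left; rw [h]
      · right; exact (Set.disjoint_image_iff e.injective).2 h
    rcases (point_primitive hD hsym hAut hflag htrans hnonreg hfrob).2 _ hblk with h | h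
    · left
      exact fun B hB C hC => e.injective (h ⟨B, hB, rfl⟩ ⟨C, hC, rfl⟩)
    · right
      ext B
      have : e B ∈ e '' T := h ▸ trivial
      simpa using this
end DesignGroup

/-! ### Structure of the Frobenius kernel -/

section KernelStructure
variable {G X : Type*} [Group G] [Finite G] [MulAction G X]

/-- A subgroup of the kernel normalized by a point stabilizer is trivial or everything: the
stabilizer acts freely by conjugation on its non-identity elements, so its order is subject to the
arithmetic restriction `harith`. -/
theorem eq_bot_or_eq_kernel {k : ℕ} {K : Subgroup G}
    (hKcard : Nat.card K = Nat.card X) (hKmem : ∀ g : G, g ∈ K ↔ g = 1 ∨ ∀ x : X, g • x ≠ x)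
    (hfrob : ∀ g : G, g ≠ 1 → ∀ x y : X, g • x = x → g • y = y → x = y)
    (hst : ∀ x : X, Nat.card (MulAction.stabilizer G x) = k)
    (harith : ∀ c, c ∣ Nat.card X → k ∣ c - 1 → c = 1 ∨ c = Nat.card X)
    {S : Subgroup G} (hSK : S ≤ K) (z : X)
    (hS : ∀ h ∈ MulAction.stabilizer G z, ∀ s ∈ S, h * s * h⁻¹ ∈ S) : S = ⊥ ∨ S = K := by
  let H : Subgroup (ConjAct G) := (MulAction.stabilizer G z).comap ConjAct.ofConjAct.toMonoidHom
  have hH : Nat.card H = k := by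
    rw [← hst z]
    exact Nat.card_congr (ConjAct.ofConjAct.toEquiv.subtypeEquiv fun _ => Iff.rfl)
  have h1 := card_dvd_ncard_of_free (H := H) (X := G) ((S : Set G) \ {1})
    (fun h s hs => by
      have e : h • s = ConjAct.ofConjAct (h : ConjAct G) * s * (ConjAct.ofConjAct (h : ConjAct G))⁻¹ := rfl
      rw [e]
      refine ⟨hS _ h.2 s hs.1, fun h2 => hs.2 ?_⟩
      exact conj_eq_one_iff.1 h2)
    (fun h h1 s hs h2 => by
      have e : h • s = ConjAct.ofConjAct (h : ConjAct G) * s * (ConjAct.ofConjAct (h : ConjAct G))⁻¹ := rfl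
      rw [e] at h2
      set t := ConjAct.ofConjAct (h : ConjAct G) with ht
      have htz : t • z = z := h.2
      have ht1 : t ≠ 1 := fun e => h1 (Subtype.ext (ConjAct.ofConjAct.injective e))
      have h3 : t • s • z = s • z := by
        rw [← mul_smul, mul_inv_eq_iff_eq_mul.1 h2, mul_smul, htz]
      have h4 := hfrob t ht1 _ _ h3 htz
      exact ((hKmem s).1 (hSK hs.1)).elim hs.2 fun h5 => h5 z h4)
  rw [hH, Set.ncard_sdiff_singleton_of_mem S.one_mem] at h1
  have h2 : (S : Set G).ncard = Nat.card S := rfl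
  rw [h2] at h1
  rcases harith _ (hKcard ▸ Subgroup.card_dvd_of_le hSK) h1 with h | h
  · exact Or.inl (Subgroup.eq_bot_of_card_eq _ h)
  · exact Or.inr (Subgroup.eq_of_le_of_card_ge hSK (hKcard.trans h.symm).le)

/-- If `N * K = G`, then `N ∩ K` has a complement in `N` by Schur–Zassenhaus; the complement has
order `k` and its non-identity elements fix exactly one point each, so it is a point stabilizer. -/
theorem stabilizer_le_normalizer [Finite X] [MulAction.IsPretransitive G X] {k : ℕ} (hk : 1 < k)
    {K : Subgroup G} [hKn : K.Normal]
    (hKcard : Nat.card K = Nat.card X) (hKmem : ∀ g : G, g ∈ K ↔ g = 1 ∨ ∀ x : X, g • x ≠ x)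
    (hfrob : ∀ g : G, g ≠ 1 → ∀ x y : X, g • x = x → g • y = y → x = y)
    (hst : ∀ x : X, Nat.card (MulAction.stabilizer G x) = k)
    (hcop : (Nat.card X).Coprime k) (hX : Nonempty X)
    {N : Subgroup G} (hN : N ⊔ K = ⊤) : ∃ z : X, MulAction.stabilizer G z ≤ N := by
  obtain ⟨x⟩ := hX
  have hindex : K.index = k := by
    have h1 := (MulAction.stabilizer G x).card_mul_index
    rw [MulAction.index_stabilizer_of_transitive G x, hst x, ← hKcard, mul_comm,
      ← K.card_mul_index] at h1
    exact (Nat.eq_of_mul_eq_mul_left Nat.card_pos h1).symm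
  have hrel : (K.subgroupOf N).index = k := by
    have := Subgroup.relIndex_sup_right (H := N) (K := K)
    rw [hN, Subgroup.relIndex_top_right, hindex] at this
    exact this.symm
  have hcop' : Nat.Coprime (Nat.card (K.subgroupOf N)) (K.subgroupOf N).index := by
    rw [hrel]
    refine Nat.Coprime.coprime_dvd_left ?_ hcop
    have : Nat.card (K.subgroupOf N) = Nat.card ((K.subgroupOf N).map N.subtype) :=
      (Subgroup.card_map_of_injective N.subtype_injective).symm
    rw [this, Subgroup.subgroupOf_map_subtype, ← hKcard]
    exact Subgroup.card_dvd_of_le inf_le_left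
  obtain ⟨M, hM⟩ := Subgroup.exists_right_complement'_of_coprime hcop'
  have hMcard : Nat.card M = k := by rw [← hM.symm.index_eq_card, hrel]
  have hnt : Nontrivial M := by rw [← Finite.one_lt_card_iff_nontrivial, hMcard]; exact hk
  obtain ⟨z, hz⟩ := exists_global_fixedPoint (H := M) (X := X) (by
    intro m hm
    have hm1 : ((m : N) : G) ≠ 1 := fun e => hm (Subtype.ext (Subtype.ext e))
    have hmK : ((m : N) : G) ∉ K := fun hK => hm (Subtype.ext
      (Subgroup.disjoint_def.1 hM.disjoint (Subgroup.mem_subgroupOf.2 hK) m.2))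
    have h3 := mt (hKmem _).2 hmK
    push Not at h3
    obtain ⟨-, y, hy⟩ := h3
    exact ⟨y, hy, fun y' hy' => hfrob _ hm1 _ _ hy' hy⟩)
  refine ⟨z, ?_⟩
  have h4 : M.map N.subtype = MulAction.stabilizer G z := by
    refine Subgroup.eq_of_le_of_card_ge ?_ ?_
    · rintro _ ⟨m, hm, rfl⟩
      exact hz ⟨m, hm⟩
    · rw [hst, Subgroup.card_map_of_injective N.subtype_injective, hMcard]
  rw [← h4]
  exact Subgroup.map_subtype_le M

/-- By the Frattini argument a Sylow subgroup of `K` is normalized by a point stabilizer, so `K` is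
a `p`-group by `eq_bot_or_eq_kernel`. The same minimality applied to the centre and to the elements
of order dividing `p` shows that `K` is elementary abelian. -/
theorem kernel_elementary_abelian [Finite X] [MulAction.IsPretransitive G X] {k : ℕ} (hk : 1 < k)
    {K : Subgroup G} [hKn : K.Normal]
    (hKcard : Nat.card K = Nat.card X) (hKmem : ∀ g : G, g ∈ K ↔ g = 1 ∨ ∀ x : X, g • x ≠ x)
    (hfrob : ∀ g : G, g ≠ 1 → ∀ x y : X, g • x = x → g • y = y → x = y)
    (hst : ∀ x : X, Nat.card (MulAction.stabilizer G x) = k)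
    (hcop : (Nat.card X).Coprime k) (hX : Nontrivial X)
    (harith : ∀ c, c ∣ Nat.card X → k ∣ c - 1 → c = 1 ∨ c = Nat.card X) :
    ∃ p d : ℕ, p.Prime ∧ Nat.card X = p ^ d ∧ (∀ a ∈ K, ∀ b ∈ K, a * b = b * a) ∧
      ∀ a ∈ K, a ^ p = 1 := by
  have hmin : ∀ S : Subgroup G, S ≤ K → ∀ z : X,
      (∀ h ∈ MulAction.stabilizer G z, ∀ s ∈ S, h * s * h⁻¹ ∈ S) → S ≠ ⊥ → S = K :=
    fun S hS z h h1 => (eq_bot_or_eq_kernel hKcard hKmem hfrob hst harith hS z h).resolve_left h1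
  have hX1 : 1 < Nat.card X := Finite.one_lt_card
  obtain ⟨x⟩ : Nonempty X := inferInstance
  obtain ⟨p, hp, hpv⟩ := Nat.exists_prime_and_dvd hX1.ne'
  have := Fact.mk hp
  -- A Sylow `p`-subgroup of `K` is all of `K`.
  have hpK : IsPGroup p K := by
    obtain ⟨S⟩ : Nonempty (Sylow p K) := inferInstance
    obtain ⟨z, hz⟩ := stabilizer_le_normalizer hk hKcard hKmem hfrob hst hcop ⟨x⟩
      S.normalizer_sup_eq_top
    have h1 : (S : Subgroup K).map K.subtype = K := by
      refine hmin _ (Subgroup.map_subtype_le _) z (fun h hh s hs => ?_) fun h => ?_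
      · exact (Subgroup.mem_normalizer_iff.1 (hz hh) s).1 hs
      · have h2 := S.dvd_card_of_dvd_card (hKcard ▸ hpv)
        have h3 : Nat.card ((S : Subgroup K).map K.subtype) = Nat.card (S : Subgroup K) :=
          Subgroup.card_map_of_injective K.subtype_injective
        rw [h, Subgroup.card_bot] at h3
        exact hp.one_lt.ne' (Nat.dvd_one.1 (h3 ▸ h2))
    have h2 : (S : Subgroup K) = ⊤ := by
      apply Subgroup.map_injective K.subtype_injective
      rw [h1, ← MonoidHom.range_eq_map, Subgroup.range_subtype]
    have h3 := S.isPGroup'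
    rw [h2] at h3
    exact h3.of_equiv Subgroup.topEquiv
  have hKnt : Nontrivial K := by
    rw [← Finite.one_lt_card_iff_nontrivial, hKcard]; exact hX1
  -- The centre of the `p`-group `K` is nontrivial and normal in `G`, hence equal to `K`.
  have hcomm : ∀ a ∈ K, ∀ b ∈ K, a * b = b * a := by
    have hZn : ((Subgroup.center K).map K.subtype).Normal :=
      ConjAct.normal_of_characteristic_of_normal
    have hZ : (Subgroup.center K).map K.subtype = K := by
      refine hmin _ (Subgroup.map_subtype_le _) x (fun h _ s hs => hZn.conj_mem s hs h) fun h => ?_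
      have := hpK.center_nontrivial
      have h3 : Nat.card ((Subgroup.center K).map K.subtype) = Nat.card (Subgroup.center K) :=
        Subgroup.card_map_of_injective K.subtype_injective
      rw [h, Subgroup.card_bot] at h3
      rw [← Finite.one_lt_card_iff_nontrivial, ← h3] at this
      exact lt_irrefl _ this
    intro a ha b hb
    rw [← hZ] at ha
    obtain ⟨a, ha, rfl⟩ := ha
    exact congrArg Subtype.val (Subgroup.mem_center_iff.1 ha ⟨b, hb⟩).symm
  -- The elements of `K` of order dividing `p`; nontrivial by Cauchy's theorem.
  let E : Subgroup G :=
    { carrier := {a | a ∈ K ∧ a ^ p = 1}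
      mul_mem' := fun {a b} ha hb => ⟨K.mul_mem ha.1 hb.1, by
        rw [(show Commute a b from hcomm a ha.1 b hb.1).mul_pow, ha.2, hb.2, one_mul]⟩
      one_mem' := ⟨K.one_mem, one_pow _⟩
      inv_mem' := fun {a} ha => ⟨K.inv_mem ha.1, by rw [inv_pow, ha.2, inv_one]⟩ }
  have hE : E = K := by
    refine hmin E (fun a ha => ha.1) x (fun h _ s hs => ⟨hKn.conj_mem s hs.1 h, ?_⟩) fun h => ?_
    · rw [conj_pow, hs.2, mul_one, mul_inv_cancel]
    · obtain ⟨a, ha⟩ := exists_prime_orderOf_dvd_card' (G := K) p (hKcard ▸ hpv)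
      have : (a : G) ∈ E := ⟨a.2, by
        rw [← ha]; exact congrArg Subtype.val (pow_orderOf_eq_one a)⟩
      rw [h, Subgroup.mem_bot] at this
      rw [show a = 1 from Subtype.ext this, orderOf_one] at ha
      exact hp.one_lt.ne ha
  obtain ⟨d, hd⟩ := IsPGroup.iff_card.1 hpK
  exact ⟨p, d, hp, hKcard.symm.trans hd, hcomm, fun a ha => (hE ▸ ha : a ∈ E).2⟩

end KernelStructure

/-! ### Parity of the block size and of the number of points -/

section Parity
variable {Ω : Type*} [Fintype Ω] [DecidableEq Ω]
variable {𝓑 : Finset (Finset Ω)} {v k lam : ℕ} {G : Subgroup (Equiv.Perm Ω)}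

/-- If `k` were even, `G_B = G_z` would contain an involution `t`, and `B` is the only block
fixed by `t`. For `y ≠ z` the involution pairs off the blocks other than `B` through `y` and
`t • y`, so `λ` is odd for `y ∈ B` and even for `y ∉ B`. -/
theorem odd_blockSize (hD : IsDesign 𝓑 v k lam) (hsym : 𝓑.card = v)
    (hAut : IsAutGroup G 𝓑) (hflag : IsFlagTransitive G 𝓑)
    (htrans : MulAction.IsPretransitive G Ω)
    (hnonreg : ∃ g : G, g ≠ 1 ∧ ∃ x : Ω, g • x = x)
    (hfrob : ∀ g : G, g ≠ 1 → ∀ x y : Ω, g • x = x → g • y = y → x = y) : Odd k := by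
  rw [← Nat.not_even_iff_odd]
  intro hk
  have hk2 := hD.two_lt_k
  have hkv := hD.k_lt_v
  have hblk : 𝓑.Nonempty := by rw [← Finset.card_pos]; omega
  obtain ⟨B, hB⟩ := hblk
  obtain ⟨z, hzB, hz⟩ := exists_point_of_block hD hsym hAut hflag htrans hnonreg hfrob hB
  have := Fact.mk Nat.prime_two
  obtain ⟨t, ht⟩ := exists_prime_orderOf_dvd_card' (G := MulAction.stabilizer G z) 2 (by
    rw [card_stabilizer_eq hD hsym hAut hflag htrans hnonreg hfrob]
    exact hk.two_dvd)
  have ht1 : (t : G) ≠ 1 := fun e => by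
    rw [show t = 1 from Subtype.ext e, orderOf_one] at ht
    omega
  have ht2 : (t : G) * t = 1 := by
    have := pow_orderOf_eq_one t
    rw [ht, pow_two] at this
    exact congrArg Subtype.val this
  have htB : (t : G) • B = B := by
    have : (t : G) ∈ MulAction.stabilizer G B := by rw [hz]; exact t.2
    exact this
  -- `t` pairs off the blocks other than `B` through the two points `y` and `t • y`
  have key : ∀ y : Ω, y ≠ z →
      Even ((𝓑.filter fun C => y ∈ C ∧ (t : G) • y ∈ C).erase B).card := by
    intro y hy
    have := Finset.sum_involution (s := (𝓑.filter fun C => y ∈ C ∧ (t : G) • y ∈ C).erase B)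
      (f := fun _ => (1 : ZMod 2)) (fun C _ => (t : G) • C) (fun C _ => CharTwo.add_self_eq_zero _)
      (fun C hC _ h => by
        rw [Finset.mem_erase, Finset.mem_filter] at hC
        exact hC.1 (block_eq_of_fixed hD hsym hAut hfrob ht1 hC.2.1 hB h htB))
      (fun C hC => by
        rw [Finset.mem_erase, Finset.mem_filter] at hC ⊢
        refine ⟨fun h => hC.1 ?_, hAut _ (t : G).2 _ hC.2.1, ?_, ?_⟩
        · rw [← one_smul G C, ← ht2, mul_smul, h, htB]
        · have := Finset.smul_mem_smul_finset (a := (t : G)) hC.2.2.2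
          rwa [← mul_smul, ht2, one_smul] at this
        · exact Finset.smul_mem_smul_finset hC.2.2.1)
      (fun C hC => by rw [← mul_smul, ht2, one_smul])
    rw [Finset.sum_const, nsmul_one, ZMod.natCast_eq_zero_iff] at this
    exact even_iff_two_dvd.2 this
  have hty : ∀ y : Ω, y ≠ z → y ≠ (t : G) • y := fun y hy h =>
    hy (hfrob t ht1 _ _ h.symm t.2)
  obtain ⟨y, hy⟩ : B.Nonempty := by
    rw [← Finset.card_pos, hD.blocks_card B hB]; omega
  have hyz : y ≠ z := fun h => hzB (h ▸ hy)
  obtain ⟨w, hw⟩ : ((Finset.univ \ B).erase z).Nonempty := by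
    rw [← Finset.card_pos, Finset.card_erase_of_mem (by simpa using hzB),
      Finset.card_sdiff_of_subset (Finset.subset_univ _), hD.blocks_card B hB, Finset.card_univ,
      hD.card_points]
    omega
  rw [Finset.mem_erase, Finset.mem_sdiff] at hw
  have h1 := key y hyz
  have h2 := key w hw.1
  have hBy : B ∈ 𝓑.filter fun C => y ∈ C ∧ (t : G) • y ∈ C := by
    rw [Finset.mem_filter]
    refine ⟨hB, hy, ?_⟩
    have := Finset.smul_mem_smul_finset (a := (t : G)) hy
    rwa [htB] at this
  rw [Finset.card_erase_of_mem hBy, hD.pair_blocks _ _ (hty y hyz)] at h1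
  rw [Finset.erase_eq_of_notMem (fun h => hw.2.2 (Finset.mem_filter.1 h).2.1),
    hD.pair_blocks _ _ (hty w hw.1)] at h2
  have := hD.lam_pos
  rcases h1 with ⟨a, ha⟩
  rcases h2 with ⟨b, hb⟩
  omega

/-- It is impossible that any two points are interchanged by some element of `G`. Otherwise, with
blocks labelled by points through `exists_blockEquiv`, the incidence matrix `A` is symmetric with
zero diagonal. Modulo a prime `q` dividing `k - λ` one has `A ^ 2 = λ J` and
`A * (A ^ 2 - k A) = 0`, so `A ^ 2 - k A` is nilpotent and `λ v = 0`. Then `q` divides `k` and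
`λ`, while `λ` divides `k - 1`. -/
theorem not_transitive_involutions (hD : IsDesign 𝓑 v k lam) (hsym : 𝓑.card = v)
    (hAut : IsAutGroup G 𝓑) (hflag : IsFlagTransitive G 𝓑)
    (htrans : MulAction.IsPretransitive G Ω)
    (hnonreg : ∃ g : G, g ≠ 1 ∧ ∃ x : Ω, g • x = x)
    (hfrob : ∀ g : G, g ≠ 1 → ∀ x y : Ω, g • x = x → g • y = y → x = y)
    (hinv : ∀ x y : Ω, ∃ t : G, t • x = y ∧ t • y = x) : False := by
  have hk2 := hD.two_lt_k
  have hkv := hD.k_lt_v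
  have hlam := hD.lam_pos
  have hkd := dvd_sub_one hD hsym hAut hflag htrans hnonreg hfrob
  have hpar := hD.param_eq hsym
  have hlt := hD.lam_lt hsym
  obtain ⟨n, hn⟩ := hkd
  have hn2 : 2 ≤ n := by
    by_contra h
    have : n = 0 ∨ n = 1 := by omega
    rcases this with rfl | rfl <;> omega
  have hk1 : k - 1 = lam * n := by
    rw [hn] at hpar
    exact Nat.eq_of_mul_eq_mul_left (by omega) (hpar.trans (by ring))
  obtain ⟨q, hq, hqd⟩ := Nat.exists_prime_and_dvd (n := k - lam) (by nlinarith [Nat.sub_add_cancel hlt.le, Nat.sub_add_cancel (show 1 ≤ k by omega)])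
  have := Fact.mk hq
  obtain ⟨e, -, he, hge⟩ := exists_blockEquiv hD hsym hAut hflag htrans hnonreg hfrob
  let b : Ω → Finset Ω := fun x => e.symm x
  have hbm : ∀ x, b x ∈ 𝓑 := fun x => (e.symm x).2
  have hsymm : ∀ x y, y ∈ b x → x ∈ b y := by
    intro x y hy
    obtain ⟨t, h1, h2⟩ := hinv x y
    have h3 := hge t (e.symm x) ⟨t • b x, hAut t t.2 _ (hbm x)⟩ rfl
    rw [Equiv.apply_symm_apply, h1] at h3
    have h4 : b y = t • b x := by
      rw [← h3]
      exact congrArg Subtype.val (e.symm_apply_apply _)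
    have h5 := Finset.smul_mem_smul_finset (a := t) hy
    rwa [h2, ← h4] at h5
  have hsymm' : ∀ x y, y ∈ b x ↔ x ∈ b y := fun x y => ⟨hsymm x y, hsymm y x⟩
  let A : Matrix Ω Ω (ZMod q) := Matrix.of fun x y => if y ∈ b x then 1 else 0
  have hkl : (k : ZMod q) = lam := by
    rw [← sub_eq_zero, ← Nat.cast_sub hlt.le]
    exact (ZMod.natCast_eq_zero_iff _ _).2 hqd
  have hA2 : A * A = Matrix.of fun _ _ => (lam : ZMod q) := by
    ext x z
    have h1 : (A * A) x z = ((𝓑.filter fun B => x ∈ B ∧ z ∈ B).card : ZMod q) := by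
      have h2 : (A * A) x z = ∑ y : Ω, if x ∈ b y ∧ z ∈ b y then (1 : ZMod q) else 0 := by
        rw [Matrix.mul_apply]
        refine Finset.sum_congr rfl fun y _ => ?_
        simp only [A, Matrix.of_apply, hsymm' x y, ← ite_and, mul_ite, mul_one, mul_zero]
        congr 1
        exact propext and_comm
      have h3 := Equiv.sum_comp e.symm
        (fun B : 𝓑 => if x ∈ (B : Finset Ω) ∧ z ∈ (B : Finset Ω) then (1 : ZMod q) else 0)
      rw [h2, h3, Finset.card_filter, Nat.cast_sum,
        ← Finset.sum_coe_sort 𝓑]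
      simp
    rw [h1, Matrix.of_apply]
    by_cases hxz : x = z
    · subst hxz
      simp only [and_self]
      rw [hD.replication hsym, hkl]
    · rw [hD.pair_blocks x z hxz]
  have hA3 : A * (A * A) = (k : ZMod q) • (A * A) := by
    rw [hA2]
    ext x z
    rw [Matrix.mul_apply]
    simp only [A, Matrix.of_apply, Matrix.smul_apply, smul_eq_mul, ite_mul, one_mul, zero_mul]
    rw [← Finset.sum_filter, Finset.sum_const, nsmul_eq_mul]
    congr 2
    rw [Finset.filter_mem_eq_inter, Finset.univ_inter, hD.blocks_card _ (hbm x)]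
  have hnil : IsNilpotent (A * A - (k : ZMod q) • A) := by
    refine ⟨2, ?_⟩
    have h1 : A * (A * A - (k : ZMod q) • A) = 0 := by
      rw [mul_sub, hA3, mul_smul_comm, sub_self]
    rw [pow_two]
    nth_rewrite 1 [show A * A - (k : ZMod q) • A = (A - (k : ZMod q) • 1) * A by
      rw [sub_mul, smul_mul_assoc, one_mul]]
    rw [mul_assoc, h1, mul_zero]
  have htr := Matrix.isNilpotent_trace_of_isNilpotent hnil
  have htrA : A.trace = 0 := by
    refine Finset.sum_eq_zero fun x _ => ?_
    have : x ∉ b x := by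
      have := he (e.symm x)
      rwa [Equiv.apply_symm_apply] at this
    simp [A, this]
  have htrA2 : (A * A).trace = (v : ZMod q) * lam := by
    rw [hA2, Matrix.trace]
    simp [hD.card_points]
  rw [isNilpotent_iff_eq_zero, Matrix.trace_sub, Matrix.trace_smul, htrA, htrA2, smul_zero,
    sub_zero] at htr
  have h5 : ((lam * (v - 1) : ℕ) : ZMod q) = -lam := by
    push_cast [Nat.cast_sub (show 1 ≤ v by omega)]
    linear_combination htr
  rw [← hpar] at h5
  push_cast [Nat.cast_sub (show 1 ≤ k by omega)] at h5
  have h6 : (k : ZMod q) = 0 := by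
    have : (k : ZMod q) * k = 0 := by linear_combination h5 + hkl
    simpa using this
  have h7 := congrArg (Nat.cast (R := ZMod q)) hk1
  push_cast [Nat.cast_sub (show 1 ≤ k by omega)] at h7
  rw [← hkl, h6] at h7
  simp at h7

end Parity

/-! ### Groups whose abelian subgroups are cyclic -/

section Cyclic
open scoped commutatorElement

/-- The annihilator of a suitable nonzero vector is a prime ideal `I` of `F[E]`. Since `E` acts freely
on nonzero vectors, it embeds into the units of the domain `F[E] / I`. -/
theorem isCyclic_of_free_representation {F E V : Type*} [Field F] [CommGroup E] [Finite E]
    [AddCommGroup V] [Module F V] [Nontrivial V] (ρ : Representation F E V)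
    (hfree : ∀ g : E, g ≠ 1 → ∀ v : V, v ≠ 0 → ρ g v ≠ v) : IsCyclic E := by
  have hN : IsNoetherianRing (MonoidAlgebra F E) := Algebra.FiniteType.isNoetherianRing F _
  have hnt : Nontrivial ρ.asModule := ρ.asModuleEquiv.toEquiv.nontrivial
  obtain ⟨I, hI⟩ := associatedPrimes.nonempty (MonoidAlgebra F E) ρ.asModule
  obtain ⟨hp, x, hx⟩ := isAssociatedPrime_iff.1 hI
  have hx0 : x ≠ 0 := by
    rintro rfl
    exact hp.ne_top (hx.trans (by ext; simp))
  refine isCyclic_of_injective_ringHom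
    ((Ideal.Quotient.mk I).toMonoidHom.comp (MonoidAlgebra.of F E)) ?_
  rw [← MonoidHom.ker_eq_bot_iff, eq_bot_iff]
  intro g hg
  by_contra hg1
  refine hfree g hg1 (ρ.asModuleEquiv x) (by simpa using hx0) ?_
  have h1 : MonoidAlgebra.of F E g - 1 ∈ I := by
    rw [← Ideal.Quotient.mk_eq_mk_iff_sub_mem, map_one]
    exact hg
  rw [hx, Submodule.mem_colon_singleton, Submodule.mem_bot, sub_smul, one_smul, sub_eq_zero] at h1
  apply ρ.asModuleEquiv.symm.injective
  rw [Representation.asModuleEquiv_symm_map_rho, LinearEquiv.symm_apply_apply, h1]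

/-- The power of a product in a group of class two, with the commutator `c` of the factors. -/
theorem mul_pow_of_central_commutator {S : Type*} [Group S] {x y c : S}
    (hc : ∀ s : S, s * c = c * s) (hyx : y * x = x * y * c) (n : ℕ) :
    (x * y) ^ n = x ^ n * y ^ n * c ^ (n.choose 2) := by
  have hcn : ∀ (m : ℕ) (s : S), s * c ^ m = c ^ m * s := fun m s =>
    (show Commute s c from hc s).pow_right m
  have h1 : ∀ n : ℕ, y ^ n * x = x * y ^ n * c ^ n := by
    intro n
    induction n with
    | zero => simp
    | succ n ih =>
      calc y ^ (n + 1) * x = y * (y ^ n * x) := by rw [pow_succ']; group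
        _ = y * x * (y ^ n * c ^ n) := by rw [ih]; group
        _ = x * y * (c * y ^ n) * c ^ n := by rw [hyx]; group
        _ = x * (y * y ^ n) * (c * c ^ n) := by rw [← hc]; group
        _ = x * y ^ (n + 1) * c ^ (n + 1) := by rw [pow_succ', pow_succ']
  induction n with
  | zero => simp
  | succ n ih =>
    calc (x * y) ^ (n + 1) = x ^ n * y ^ n * (c ^ (n.choose 2) * (x * y)) := by
          rw [pow_succ, ih]; group
      _ = x ^ n * (y ^ n * x) * (y * c ^ (n.choose 2)) := by rw [← hcn]; group
      _ = x ^ n * x * y ^ n * (c ^ n * y) * c ^ (n.choose 2) := by rw [h1]; group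
      _ = (x ^ n * x) * (y ^ n * y) * (c ^ n * c ^ (n.choose 2)) := by rw [← hcn]; group
      _ = x ^ (n + 1) * y ^ (n + 1) * c ^ ((n + 1).choose 2) := by
          rw [← pow_succ, ← pow_succ, ← pow_add, Nat.choose_succ_succ' n 1, Nat.choose_one_right]

/-- For odd `l`, an `l`-group all of whose abelian subgroups are cyclic is cyclic. Otherwise
induction gives two distinct cyclic maximal subgroups `M` and `N`, with central intersection
containing all commutators and `l`-th powers; then `s ↦ s ^ l` is a homomorphism, whose kernel
contains an abelian group of order `l ^ 2` and exponent `l`. -/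
theorem isCyclic_of_abelian_subgroups.{u} (l : ℕ) [hl : Fact l.Prime] (hodd : Odd l) (n : ℕ) :
    ∀ (S : Type u) [Group S] [Finite S], Nat.card S = l ^ n →
      (∀ E : Subgroup S, (∀ a ∈ E, ∀ b ∈ E, a * b = b * a) → IsCyclic E) → IsCyclic S := by
  induction n with
  | zero =>
    intro S _ _ hS _
    have := (Nat.card_eq_one_iff_unique.1 hS).1
    exact isCyclic_of_subsingleton
  | succ n ih =>
    intro S _ _ hS hab
    have hl1 := hl.out.one_lt
    have hindex : ∀ M : Subgroup S, Nat.card M = l ^ n → M.index = l := fun M hM => by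
      have := M.card_mul_index
      rw [hM, hS, pow_succ] at this
      exact Nat.eq_of_mul_eq_mul_left (pow_pos hl.out.pos n) this
    have hcyc : ∀ M : Subgroup S, Nat.card M = l ^ n → ∀ a ∈ M, ∀ b ∈ M, a * b = b * a := by
      intro M hM a ha b hb
      have : IsCyclic M := ih M hM fun E hE => by
        have := hab (E.map M.subtype) (by
          rintro _ ⟨a, ha, rfl⟩ _ ⟨b, hb, rfl⟩
          exact congrArg Subtype.val (hE a ha b hb))
        exact (E.equivMapOfInjective _ M.subtype_injective).symm.isCyclic.1 this
      exact congrArg Subtype.val (IsMulCommutative.is_comm.comm (⟨a, ha⟩ : M) ⟨b, hb⟩)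
    have hnormal : ∀ M : Subgroup S, Nat.card M = l ^ n → M.Normal := fun M hM => by
      apply Subgroup.normal_of_index_eq_minFac_card
      rw [hindex M hM, hS, hl.out.pow_minFac n.succ_ne_zero]
    have hcomm : ∀ M : Subgroup S, Nat.card M = l ^ n → commutator S ≤ M := fun M hM => by
      have := hnormal M hM
      rw [← Subgroup.Normal.quotient_commutative_iff_commutator_le]
      have : IsCyclic (S ⧸ M) := isCyclic_of_prime_card (p := l) (hindex M hM)
      infer_instance
    obtain ⟨M, hM⟩ := Sylow.exists_subgroup_card_pow_prime (G := S) l (n := n)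
      (hS ▸ pow_dvd_pow l n.le_succ)
    obtain ⟨x, hx⟩ : ∃ x, x ∉ M := by
      by_contra! h
      rw [(Subgroup.eq_top_iff' M).2 h, Subgroup.card_top, hS] at hM
      exact absurd (Nat.pow_right_injective hl1 hM) (by omega)
    obtain ⟨j, hj, hxj⟩ : ∃ j ≤ n + 1, orderOf x = l ^ j :=
      (Nat.dvd_prime_pow hl.out).1 (hS ▸ orderOf_dvd_natCard x)
    rcases hj.eq_or_lt with rfl | hjn
    · exact isCyclic_of_orderOf_eq_card x (hxj.trans hS.symm)
    exfalso
    -- A second maximal subgroup `N`, containing an element `x` outside `M`.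
    obtain ⟨N, hN, hxN⟩ := Sylow.exists_subgroup_card_pow_prime_le (G := S) l (n := j) (m := n)
      (hS ▸ pow_dvd_pow l n.le_succ) (Subgroup.zpowers x) (by rw [Nat.card_zpowers, hxj]) (by omega)
    have hxN : x ∈ N := hxN (Subgroup.mem_zpowers x)
    -- the intersection of two distinct maximal subgroups is central
    have hcent : ∀ z ∈ M ⊓ N, ∀ s : S, s * z = z * s := by
      intro z hz
      have h1 : M ≤ Subgroup.centralizer {z} := fun m hm =>
        Subgroup.mem_centralizer_singleton_iff.2 (hcyc M hM _ hm _ hz.1)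
      have h2 : x ∈ Subgroup.centralizer {z} :=
        Subgroup.mem_centralizer_singleton_iff.2 (hcyc N hN _ hxN _ hz.2)
      have h3 := Subgroup.relIndex_mul_index h1
      rw [hindex M hM] at h3
      rcases (Nat.dvd_prime hl.out).1 ⟨_, (mul_comm _ _).trans h3 |>.symm⟩ with h | h
      · intro s
        rw [Subgroup.index_eq_one] at h
        exact Subgroup.mem_centralizer_singleton_iff.1 (h ▸ Subgroup.mem_top s)
      · rw [h] at h3
        have h4 := Nat.eq_of_mul_eq_mul_right hl.out.pos (h3.trans (one_mul l).symm)
        exact absurd (Subgroup.relIndex_eq_one.1 h4 h2) hx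
    have hpow : ∀ s : S, s ^ l ∈ M ⊓ N := fun s => by
      have h1 := hnormal M hM
      have h2 := hnormal N hN
      exact ⟨hindex M hM ▸ M.pow_index_mem s, hindex N hN ▸ N.pow_index_mem s⟩
    -- Multiplicative because `l ∣ l.choose 2` for odd `l` and commutators have order dividing `l`.
    let φ : S →* S := MonoidHom.mk' (fun s => s ^ l) fun s t => by
      have hc := hcent (t⁻¹ * s⁻¹ * t * s) (by
        have h1 : ⁅t⁻¹, s⁻¹⁆ ∈ commutator S := 
          Subgroup.commutator_mem_commutator (Subgroup.mem_top _) (Subgroup.mem_top _)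
        rw [commutatorElement_def, inv_inv, inv_inv] at h1
        exact ⟨hcomm M hM h1, hcomm N hN h1⟩)
      have h1 := mul_pow_of_central_commutator (x := s) (y := t) hc (by group) l
      have h2 : (t⁻¹ * s⁻¹ * t * s) ^ l = 1 := by
        have h3 := hcent _ (hpow t) s
        have h4 := mul_pow_of_central_commutator (x := s) (y := t) hc (by group) l
        have h5 : (s⁻¹ * t * s) ^ l = t ^ l := by
          have h6 : (s⁻¹ * t * s) ^ l = s⁻¹ * t ^ l * s := by
            simpa using conj_pow (a := s⁻¹) (b := t) (i := l)
          rw [h6, mul_assoc, ← h3, inv_mul_cancel_left]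
        have h7 : s⁻¹ * t * s = t * (t⁻¹ * s⁻¹ * t * s) := by group
        have h8 : Commute t (t⁻¹ * s⁻¹ * t * s) := hc t
        rw [h7, h8.mul_pow] at h5
        exact mul_left_cancel (h5.trans (mul_one _).symm)
      obtain ⟨m, hm⟩ := hodd
      have h3 : l.choose 2 = l * m := by
        rw [Nat.choose_two_right, hm]
        rw [Nat.add_sub_cancel, mul_left_comm]
        exact Nat.mul_div_cancel_left _ (by norm_num)
      rw [h1, h3, pow_mul, h2, one_pow, mul_one]
    -- The range lies in `M ⊓ N`, which has order less than `l ^ n`.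
    have hker : l ^ 2 ∣ Nat.card φ.ker := by
      have h1 := φ.ker.card_mul_index
      rw [Subgroup.index_ker, hS] at h1
      have h2 : Nat.card φ.range < l ^ n := by
        rw [← hM]
        refine lt_of_le_of_lt (Subgroup.card_le_of_le (K := M ⊓ N) ?_) ?_
        · rintro _ ⟨s, rfl⟩
          exact hpow s
        · refine lt_of_le_of_ne (Subgroup.card_le_of_le inf_le_left) fun h => hx ?_
          have h3 := Subgroup.eq_of_le_of_card_ge (inf_le_left : M ⊓ N ≤ M) h.ge
          have h4 := Subgroup.eq_of_le_of_card_ge (inf_eq_left.1 h3) (hN.trans hM.symm).le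
          rw [h4]
          exact hxN
      obtain ⟨i, -, hi⟩ : ∃ i ≤ n + 1, Nat.card φ.ker = l ^ i :=
        (Nat.dvd_prime_pow hl.out).1 ⟨_, h1.symm⟩
      rw [hi]
      apply pow_dvd_pow
      by_contra h
      have h3 : l ^ i ≤ l ^ 1 := Nat.pow_le_pow_right hl.out.pos (by omega)
      have h4 : Nat.card φ.ker * Nat.card φ.range < l * l ^ n := by
        rw [hi]
        exact Nat.mul_lt_mul_of_le_of_lt (by simpa using h3) h2 hl.out.pos
      rw [h1, pow_succ'] at h4
      exact lt_irrefl _ h4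
    obtain ⟨E, hE⟩ := Sylow.exists_subgroup_card_pow_prime (G := φ.ker) l hker
    have hEc := IsPGroup.isMulCommutative_of_card_eq_prime_sq hE
    have hcE := hab (E.map φ.ker.subtype) (by
      rintro _ ⟨a, ha, rfl⟩ _ ⟨b, hb, rfl⟩
      have h9 := hEc.is_comm.comm ⟨a, ha⟩ ⟨b, hb⟩
      exact congrArg (fun t : E => ((t : φ.ker) : S)) h9)
    have hcE' : IsCyclic E :=
      (E.equivMapOfInjective _ φ.ker.subtype_injective).symm.isCyclic.1 hcE
    obtain ⟨g, hg⟩ := hcE'.exists_generator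
    have h1 := orderOf_eq_card_of_forall_mem_zpowers hg
    have h2 : g ^ l = 1 := Subtype.ext (Subtype.ext (g : φ.ker).2)
    have h3 := Nat.le_of_dvd hl.out.pos (orderOf_dvd_of_pow_eq_one h2)
    rw [h1, hE] at h3
    nlinarith
end Cyclic

/-! ### A self-centralizing normal cyclic subgroup -/

section Cyclic2

/-- The Sylow subgroups of `H` are cyclic, so `commutator H` and the abelianization are cyclic. The
centralizer of `commutator H` is then abelian, hence cyclic, and it contains its own centralizer
because it contains `commutator H`. -/
theorem exists_selfCentralizing_zpowers {H : Type*} [Group H] [Finite H]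
    (hodd : Odd (Nat.card H))
    (hab : ∀ E : Subgroup H, (∀ a ∈ E, ∀ b ∈ E, a * b = b * a) → IsCyclic E) :
    ∃ a : H, (Subgroup.zpowers a).Normal ∧ ∀ h, h * a = a * h → h ∈ Subgroup.zpowers a := by
  have hZ : IsZGroup H := by
    refine ⟨fun l hl P => ?_⟩
    have := Fact.mk hl
    obtain ⟨n, hn⟩ := IsPGroup.iff_card.1 P.isPGroup'
    by_cases hlo : Odd l
    · refine isCyclic_of_abelian_subgroups l hlo n P hn fun E hE => ?_
      have := hab (E.map (P : Subgroup H).subtype) (by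
          rintro _ ⟨a, ha, rfl⟩ _ ⟨b, hb, rfl⟩
          exact congrArg Subtype.val (hE a ha b hb))
      exact (E.equivMapOfInjective _ (P : Subgroup H).subtype_injective).symm.isCyclic.1 this
    · have h1 : Odd (Nat.card P) := Odd.of_dvd_nat hodd (Subgroup.card_subgroup_dvd_card _)
      have h2 : n = 0 := by
        by_contra h
        rw [hn, Nat.odd_pow_iff h] at h1
        exact hlo h1
      rw [h2, pow_zero] at hn
      have := (Nat.card_eq_one_iff_unique.1 hn).1
      exact isCyclic_of_subsingleton
  have hC := IsZGroup.isCyclic_commutator H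
  have hA := IsZGroup.isCyclic_abelianization (G := H)
  let A : Subgroup H := Subgroup.centralizer (commutator H : Set H)
  have hAn : A.Normal := Subgroup.normal_centralizer
  have hcomm : ∀ x ∈ A, ∀ y ∈ A, x * y = y * x := by
    have : IsMulCommutative A := by
      refine MonoidHom.isMulCommutative_of_isCyclic_of_ker_le_center
        ((Abelianization.of (G := H)).comp A.subtype) fun x hx => ?_
      have hx' : (x : H) ∈ commutator H := by
        rw [← Abelianization.ker_of H]
        exact hx
      rw [Subgroup.mem_center_iff]
      intro y
      exact Subtype.ext (Subgroup.mem_centralizer_iff.1 y.2 _ hx').symm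
    intro x hx y hy
    exact congrArg Subtype.val (this.is_comm.comm (⟨x, hx⟩ : A) ⟨y, hy⟩)
  have hAc := hab A hcomm
  obtain ⟨a, ha⟩ := hAc.exists_generator
  have hz : Subgroup.zpowers (a : H) = A := by
    refine le_antisymm (Subgroup.zpowers_le.2 a.2) fun x hx => ?_
    obtain ⟨i, hi⟩ := ha ⟨x, hx⟩
    exact ⟨i, by simpa using congrArg Subtype.val hi⟩
  refine ⟨a, by rw [hz]; exact hAn, fun h hh => ?_⟩
  rw [hz]
  refine Subgroup.mem_centralizer_iff.2 fun c hc => ?_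
  have hcA : c ∈ A := by
    refine Subgroup.mem_centralizer_iff.2 fun d hd => ?_
    exact congrArg Subtype.val (IsMulCommutative.is_comm.comm (⟨d, hd⟩ : commutator H) ⟨c, hc⟩)
  rw [← hz] at hcA
  obtain ⟨i, rfl⟩ := hcA
  exact ((show Commute h a from hh).zpow_right i).symm
end Cyclic2

/-! ### Eigenspaces under conjugation -/

section Eigenvalues
open Polynomial TensorProduct

variable {k V K : Type*} [Field k] [Field K] [Algebra k K] [AddCommGroup V] [Module k V]

/-- A polynomial over `k` vanishing at an eigenvalue of `M` in an extension `K` makes `M` singular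
already over `k`: were `f(M)` invertible, it would stay invertible after base change. -/
theorem exists_aeval_apply_eq_zero [Module.Finite k V] {M : Module.End k V} {μ : K}
    (hμ : Module.End.HasEigenvalue (M.baseChange K) μ) {f : k[X]} (hf : aeval μ f = 0) :
    ∃ v : V, v ≠ 0 ∧ aeval M f v = 0 := by
  by_contra! h
  have h1 : IsUnit (aeval M f) := by
    rw [LinearMap.isUnit_iff_ker_eq_bot, LinearMap.ker_eq_bot']
    intro v hv
    by_contra hv0
    exact h v hv0 hv
  obtain ⟨x, hx⟩ := hμ.exists_hasEigenvector
  have h2 := h1.map (Module.End.baseChangeHom k K V)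
  have h3 : Module.End.baseChangeHom k K V (aeval M f) = aeval (M.baseChange K) f :=
    (aeval_algHom_apply (Module.End.baseChangeHom k K V) M f).symm
  rw [h3, LinearMap.isUnit_iff_ker_eq_bot, LinearMap.ker_eq_bot'] at h2
  refine hx.2 (h2 x ?_)
  rw [← aeval_map_algebraMap K, Module.End.aeval_apply_of_hasEigenvector hx, eval_map_algebraMap,
    hf, zero_smul]

/-- If `N⁻¹ = N'` and `N M N⁻¹ = M ^ j`, then `N'` maps the `μ`-eigenspace of `M` into the
`μ ^ j`-eigenspace. -/
theorem hasEigenvalue_pow_of_conj {M N N' : Module.End k V} {j : ℕ} (h1 : N * N' = 1)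
    (h2 : M * N' = N' * M ^ j) {μ : K}
    (hμ : Module.End.HasEigenvalue (M.baseChange K) μ) :
    Module.End.HasEigenvalue (M.baseChange K) (μ ^ j) := by
  obtain ⟨x, hx⟩ := hμ.exists_hasEigenvector
  let Φ := Module.End.baseChangeHom k K V
  have e1 : Φ N * Φ N' = 1 := by rw [← map_mul, h1, map_one]
  have e2 : Φ M * Φ N' = Φ N' * Φ M ^ j := by rw [← map_mul, h2, map_mul, map_pow]
  refine Module.End.hasEigenvalue_of_hasEigenvector (x := Φ N' x)
    ⟨Module.End.mem_eigenspace_iff.2 ?_, fun h => hx.2 ?_⟩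
  · have e3 := LinearMap.congr_fun e2 x
    have e4 : (Φ M ^ j) x = μ ^ j • x := hx.pow_apply j
    rw [Module.End.mul_apply, Module.End.mul_apply, e4, map_smul] at e3
    exact e3
  · have e3 := LinearMap.congr_fun e1 x
    rw [Module.End.mul_apply, h, map_zero] at e3
    exact e3.symm

/-- The characteristic polynomial of `M` has its coefficients in `F_p`, so its set of roots is
closed under the Frobenius map. -/
theorem hasEigenvalue_frobenius {p : ℕ} [Fact p.Prime] {V K : Type*} [Field K] [Algebra (ZMod p) K]
    [AddCommGroup V] [Module (ZMod p) V] [Module.Finite (ZMod p) V] {M : Module.End (ZMod p) V}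
    {μ : K} (hμ : Module.End.HasEigenvalue (M.baseChange K) μ) :
    Module.End.HasEigenvalue (M.baseChange K) (μ ^ p) := by
  rw [Module.End.hasEigenvalue_iff_isRoot_charpoly, LinearMap.charpoly_baseChange, IsRoot.def,
    eval_map_algebraMap] at hμ ⊢
  rw [← expand_aeval, ZMod.expand_card, map_pow, hμ, zero_pow (Fact.out : p.Prime).ne_zero]

theorem card_eigenvalues_le [Module.Finite k V] (M : Module.End k V) (s : Finset K)
    (hs : ∀ μ ∈ s, Module.End.HasEigenvalue (M.baseChange K) μ) :
    s.card ≤ Module.finrank k V := by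
  classical
  have h1 : s ⊆ (M.baseChange K).charpoly.roots.toFinset := fun μ hμ => by
    rw [Multiset.mem_toFinset, mem_roots (LinearMap.charpoly_monic _).ne_zero,
      ← Module.End.hasEigenvalue_iff_isRoot_charpoly]
    exact hs μ hμ
  refine (Finset.card_le_card h1).trans ((Multiset.toFinset_card_le _).trans
    ((card_roots' _).trans ?_))
  rw [LinearMap.charpoly_natDegree, Module.finrank_baseChange]
end Eigenvalues

/-! ### Conjugation acts by powers of Frobenius -/

section Multiplier
open Polynomial TensorProduct

/-- The numerical inequality behind the bound on the conjugation exponents. Writing `d = 2 r + m`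
gives `j ≤ 3 m`, and the claim follows from `9 m ^ 2 ≤ 4 * 3 ^ m`. -/
theorem sq_mul_le_pow {p d r α j : ℕ} (hp : 3 ≤ p) (hd : 3 * r ≤ d) (hj : j ≤ d)
    (hα : 2 * α ≤ p ^ r) : (α * j) ^ 2 ≤ p ^ d := by
  obtain ⟨m, rfl⟩ : ∃ m, d = 2 * r + m := ⟨d - 2 * r, by omega⟩
  have key : ∀ m : ℕ, 9 * m ^ 2 ≤ 4 * 3 ^ m := by
    intro m
    induction m with
    | zero => simp
    | succ m ih =>
      rcases Nat.lt_or_ge m 3 with h | h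
      · interval_cases m <;> norm_num
      · rw [pow_succ 3]
        nlinarith
  have h1 : 4 * (α * j) ^ 2 ≤ 4 * p ^ (2 * r + m) :=
    calc 4 * (α * j) ^ 2 = (2 * α) ^ 2 * j ^ 2 := by ring
      _ ≤ (p ^ r) ^ 2 * (9 * m ^ 2) := by
        refine Nat.mul_le_mul (Nat.pow_le_pow_left hα 2) ?_
        have : j ≤ 3 * m := by omega
        calc j ^ 2 ≤ (3 * m) ^ 2 := Nat.pow_le_pow_left this 2
          _ = 9 * m ^ 2 := by ring
      _ ≤ (p ^ r) ^ 2 * (4 * p ^ m) :=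
        Nat.mul_le_mul le_rfl ((key m).trans (Nat.mul_le_mul le_rfl (Nat.pow_le_pow_left hp m)))
      _ = 4 * p ^ (2 * r + m) := by rw [pow_add, mul_comm 2 r, pow_mul]; ring
  omega

/-- Every eigenvalue of `a` has the same order as `a`: if `ζ ^ n = 1`, then `ρ a ^ n` fixes a
non-zero vector, and freeness of the action gives `a ^ n = 1`. -/
theorem orderOf_eigenvalue {p : ℕ} [Fact p.Prime] {V H K : Type*} [AddCommGroup V]
    [Module (ZMod p) V] [Finite V] [Group H] [Finite H] [Field K] [Algebra (ZMod p) K]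
    (ρ : Representation (ZMod p) H V)
    (hfree : ∀ h : H, h ≠ 1 → ∀ v : V, v ≠ 0 → ρ h v ≠ v) {a : H} {ζ : K}
    (hζ : Module.End.HasEigenvalue ((ρ a).baseChange K) ζ) : orderOf ζ = orderOf a := by
  apply Nat.dvd_antisymm
  · apply orderOf_dvd_of_pow_eq_one
    obtain ⟨x, hx⟩ := hζ.exists_hasEigenvector
    have h1 := hx.pow_apply (orderOf a)
    have h2 : (ρ a).baseChange K ^ orderOf a = 1 := by
      rw [← LinearMap.baseChange_pow, ← map_pow, pow_orderOf_eq_one, map_one, 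
        LinearMap.baseChange_one]
    rw [h2, Module.End.one_apply] at h1
    exact smul_left_injective K hx.2 (h1.symm.trans (one_smul K x).symm)
  · apply orderOf_dvd_of_pow_eq_one
    by_contra h
    obtain ⟨v, hv, h1⟩ := exists_aeval_apply_eq_zero hζ
      (f := (X ^ orderOf ζ - 1 : (ZMod p)[X])) (by simp [pow_orderOf_eq_one])
    refine hfree _ h v hv ?_
    rw [map_sub, map_one, map_pow, aeval_X, LinearMap.sub_apply, sub_eq_zero] at h1
    rw [map_pow, h1, Module.End.one_apply]

theorem coprime_orderOf_of_charP {K : Type*} [Field K] {p : ℕ} [hp : Fact p.Prime] [CharP K p]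
    {ζ : K} (h0 : 0 < orderOf ζ) : (orderOf ζ).Coprime p := by
  rw [Nat.coprime_comm, hp.out.coprime_iff_not_dvd]
  rintro ⟨n, hn⟩
  have h1 : ζ ^ (p ^ 1 * n) = 1 := by rw [pow_one, ← hn, pow_orderOf_eq_one]
  rw [ExpChar.pow_prime_pow_mul_eq_one_iff p 1 n ζ] at h1
  have h2 := orderOf_dvd_of_pow_eq_one h1
  have h4 : 0 < n := Nat.pos_of_ne_zero fun h => by rw [hn, h, mul_zero] at h0; omega
  have h5 := Nat.le_of_dvd h4 h2
  have h6 := hp.out.one_lt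
  nlinarith

/-- The elements `(g a g⁻¹) ^ (p ^ i)` are powers `a ^ n` for which `ζ ^ n` is again an eigenvalue
of `ρ a`; distinct elements give distinct eigenvalues, so there are at most `dim V` of them. -/
theorem card_conjugates_le {p : ℕ} [hp : Fact p.Prime] {V H K : Type*}
    [AddCommGroup V] [Module (ZMod p) V] [Finite V] [Group H] [Finite H] [Field K]
    [Algebra (ZMod p) K] (ρ : Representation (ZMod p) H V)
    (hfree : ∀ h : H, h ≠ 1 → ∀ v : V, v ≠ 0 → ρ h v ≠ v) {a : H}
    [hn : (Subgroup.zpowers a).Normal] {ζ : K}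
    (hζ : Module.End.HasEigenvalue ((ρ a).baseChange K) ζ) (s : Finset H)
    (hs : ∀ x ∈ s, ∃ (g : H) (i : ℕ), x = (g * a * g⁻¹) ^ p ^ i) :
    s.card ≤ Module.finrank (ZMod p) V := by
  classical
  have hord := orderOf_eigenvalue ρ hfree hζ
  have hgen : ∀ g : H, ∃ j : ℕ, g * a * g⁻¹ = a ^ j := fun g => by
    obtain ⟨j, hj⟩ := mem_powers_iff_mem_zpowers.2 (hn.conj_mem a (Subgroup.mem_zpowers a) g)
    exact ⟨j, hj.symm⟩
  have hFr : ∀ i : ℕ, Module.End.HasEigenvalue ((ρ a).baseChange K) (ζ ^ p ^ i) := by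
    intro i
    induction i with
    | zero => simpa using hζ
    | succ i ih =>
      rw [pow_succ, pow_mul]
      exact hasEigenvalue_frobenius ih
  have hcomm : ∀ (g : H) (j : ℕ), g * a * g⁻¹ = a ^ j → ρ a * ρ g⁻¹ = ρ g⁻¹ * ρ a ^ j := by
    intro g j hj
    have h2 : a * g⁻¹ = g⁻¹ * a ^ j := by rw [← hj]; group
    rw [← map_pow, ← map_mul, ← map_mul, h2]
  have h1 : ∀ x : s, ∃ n : ℕ, (x : H) = a ^ n ∧
      Module.End.HasEigenvalue ((ρ a).baseChange K) (ζ ^ n) := by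
    intro x
    obtain ⟨g, i, h⟩ := hs x x.2
    obtain ⟨j, hj⟩ := hgen g
    have h2 := hasEigenvalue_pow_of_conj (M := ρ a) (N := ρ g) (N' := ρ g⁻¹) (j := j)
      (by rw [← map_mul, mul_inv_cancel, map_one]) (hcomm g j hj) (hFr i)
    rw [← pow_mul] at h2
    exact ⟨p ^ i * j, by rw [h, hj, ← pow_mul, mul_comm j], h2⟩
  choose n hn1 hn2 using h1
  have hu : IsUnit ζ := IsUnit.of_pow_eq_one (pow_orderOf_eq_one ζ) (hord ▸ (orderOf_pos a).ne')
  obtain ⟨u, rfl⟩ := hu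
  rw [orderOf_units] at hord
  have hinj : Function.Injective fun x => (u : K) ^ n x := by
    intro x y hxy
    have hxy : u ^ n x = u ^ n y := Units.ext (by simpa using hxy)
    apply Subtype.ext
    rw [hn1, hn1]
    exact pow_eq_pow_iff_modEq.2 (hord ▸ pow_eq_pow_iff_modEq.1 hxy)
  rw [← Finset.card_attach, ← Finset.card_image_of_injective _ hinj]
  apply card_eigenvalues_le (ρ a)
  intro μ hμ
  obtain ⟨x, -, rfl⟩ := Finset.mem_image.1 hμ
  exact hn2 x

/-- In the automorphism group of the cyclic group `⟨a⟩`, let `U` be generated by `x ↦ x ^ p`, of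
order `r`, and let `J` be the image of the group under conjugation. The counting hypothesis says
`|J U| ≤ D`. If `J` were not contained in `U`, the odd index of `J ∩ U` in `J` would be at least `3`,
so `3 r ≤ D`; together with `2 |a| ≤ p ^ r` this gives `|H| ^ 2 = (|a| |J|) ^ 2 ≤ p ^ D`, against
the hypothesis. -/
theorem conj_eq_pow_prime_pow_of_card_le {p : ℕ} (hp : p.Prime) (hp2 : Odd p) {H : Type*}
    [Group H] [Finite H] (hodd : Odd (Nat.card H)) (a : H)
    [hn : (Subgroup.zpowers a).Normal] (hself : ∀ h, h * a = a * h → h ∈ Subgroup.zpowers a)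
    (hcop : (orderOf a).Coprime p) {D : ℕ}
    (hcount : ∀ s : Finset H, (∀ x ∈ s, ∃ (g : H) (i : ℕ), x = (g * a * g⁻¹) ^ p ^ i) →
      s.card ≤ D)
    (hlt : p ^ D < Nat.card H ^ 2) (h : H) : ∃ i : ℕ, h * a * h⁻¹ = a ^ p ^ i := by
  classical
  have hp3 : 3 ≤ p := by
    have := hp.two_le
    obtain ⟨t, ht⟩ := hp2
    omega
  set A := Subgroup.zpowers a with hA
  let a' : A := ⟨a, Subgroup.mem_zpowers a⟩
  have hgen : ∀ x : A, ∃ n : ℕ, x = a' ^ n := by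
    intro x
    obtain ⟨n, hn⟩ := mem_powers_iff_mem_zpowers.2 x.2
    exact ⟨n, Subtype.ext hn.symm⟩
  have hext : ∀ f g : MulAut A, f a' = g a' → f = g := by
    intro f g hfg
    ext x
    obtain ⟨n, rfl⟩ := hgen x
    rw [map_pow, map_pow, hfg]
  have hcop' : (Nat.card A).Coprime p := by rwa [Nat.card_zpowers]
  -- the automorphism `x ↦ x ^ p` of the cyclic group generated by `a`
  obtain ⟨Fr, hFr1⟩ : ∃ Fr : MulAut A, ∀ x, Fr x = x ^ p :=
    ⟨MulEquiv.ofBijective (MonoidHom.mk' (fun x : A => x ^ p) fun x y =>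
      Commute.mul_pow (IsMulCommutative.is_comm.comm x y) p) (powCoprime hcop').bijective,
      fun x => rfl⟩
  have hFr : ∀ (n : ℕ) (x : A), (Fr ^ n) x = x ^ p ^ n := by
    intro n
    induction n with
    | zero => simp
    | succ n ih =>
      intro x
      rw [pow_succ', MulAut.mul_apply, ih, pow_succ, pow_mul, hFr1]
  have hFrc : ∀ f : MulAut A, f * Fr = Fr * f := by
    intro f
    ext x
    rw [MulAut.mul_apply, MulAut.mul_apply, hFr1, hFr1, map_pow]
  obtain ⟨U, hU⟩ : ∃ U, U = Subgroup.zpowers Fr := ⟨_, rfl⟩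
  have hUn : U.Normal := by
    refine ⟨fun u hu g => ?_⟩
    rw [hU] at hu ⊢
    obtain ⟨n, rfl⟩ := hu
    have h1 : Commute g Fr := hFrc g
    rw [(h1.zpow_right n).eq, mul_inv_cancel_right]
    exact ⟨n, rfl⟩
  obtain ⟨J, hJ⟩ : ∃ J, J = (MulAut.conjNormal (H := A)).range := ⟨_, rfl⟩
  have hconj : ∀ g : H, ((MulAut.conjNormal g : MulAut A) a' : H) = g * a * g⁻¹ := fun g => rfl
  obtain ⟨r, hr⟩ : ∃ r, r = orderOf Fr := ⟨_, rfl⟩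
  have hr0 : 0 < r := hr ▸ orderOf_pos Fr
  have hdvd : orderOf a ∣ p ^ r - 1 := by
    apply orderOf_dvd_of_pow_eq_one
    have h1 := hFr r a'
    rw [hr, pow_orderOf_eq_one, MulAut.one_apply, ← hr] at h1
    have h2 : a = a ^ p ^ r := congrArg Subtype.val h1
    have h3 : a ^ (p ^ r - 1) * a = a := by
      rw [← pow_succ, Nat.sub_add_cancel (Nat.one_le_pow _ _ hp.pos), ← h2]
    exact mul_eq_right.1 h3
  -- The odd number `orderOf a` divides the even number `p ^ r - 1`.
  have h2α : 2 * orderOf a ≤ p ^ r := by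
    have hαodd : Odd (orderOf a) := Odd.of_dvd_nat hodd (orderOf_dvd_natCard a)
    have h1 : 2 ∣ p ^ r - 1 := by
      obtain ⟨t, ht⟩ := hp2.pow (n := r)
      omega
    have h2 := (Nat.coprime_two_left.2 hαodd).mul_dvd_of_dvd_of_dvd h1 hdvd
    refine (Nat.le_of_dvd ?_ h2).trans (Nat.sub_le _ _)
    have : 1 < p ^ r := Nat.one_lt_pow hr0.ne' hp.one_lt
    omega
  -- The kernel of conjugation on `⟨a⟩` is `⟨a⟩`, which is its own centralizer.
  have hJcard : orderOf a * Nat.card J = Nat.card H := by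
    have h1 : (MulAut.conjNormal (H := A)).ker = A := by
      ext g
      rw [MonoidHom.mem_ker]
      constructor
      · intro hg
        apply hself
        have := hconj g
        rw [hg] at this
        exact (mul_inv_eq_iff_eq_mul.1 this.symm)
      · intro hg
        apply hext
        apply Subtype.ext
        rw [hconj]
        obtain ⟨n, rfl⟩ := hg
        rw [((Commute.refl a).zpow_left n).eq, mul_inv_cancel_right]
        rfl
    rw [hJ, ← Nat.card_zpowers, ← Subgroup.index_ker, h1]
    exact A.card_mul_index
  -- An element of `J U` is determined by the image of `a`, of the form `(g a g⁻¹) ^ (p ^ i)`.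
  have hS : Nat.card (J ⊔ U : Subgroup (MulAut A)) ≤ D := by
    have hinj : Function.Injective
        fun f : (J ⊔ U : Subgroup (MulAut A)) => (((f : MulAut A) a' : A) : H) :=
      fun f g hfg => Subtype.ext (hext _ _ (Subtype.ext hfg))
    have := Fintype.ofFinite (J ⊔ U : Subgroup (MulAut A))
    rw [Nat.card_eq_fintype_card, ← Finset.card_univ, ← Finset.card_image_of_injective _ hinj]
    apply hcount
    intro x hx
    obtain ⟨⟨f, hf⟩, -, rfl⟩ := Finset.mem_image.1 hx
    rw [← SetLike.mem_coe, Subgroup.mul_normal] at hf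
    obtain ⟨j, hj, u, hu, rfl⟩ := hf
    rw [SetLike.mem_coe, hJ] at hj
    obtain ⟨g, rfl⟩ := hj
    rw [SetLike.mem_coe, hU] at hu
    obtain ⟨i, rfl⟩ := mem_powers_iff_mem_zpowers.2 hu
    refine ⟨g, i, ?_⟩
    simp only [MulAut.mul_apply, hFr, map_pow]
    rw [← hconj]
    rfl
  have hrel : U.relIndex J * r = Nat.card (J ⊔ U : Subgroup (MulAut A)) := by
    have h1 := Subgroup.relIndex_mul_relIndex ⊥ U (J ⊔ U) bot_le le_sup_right
    rw [Subgroup.relIndex_bot_left, Subgroup.relIndex_bot_left, Subgroup.relIndex_sup_right] at h1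
    rw [← h1, hU, Nat.card_zpowers, ← hr, mul_comm]
  have hJU : J ≤ U := by
    rw [← Subgroup.relIndex_eq_one]
    by_contra hne
    have h1 : Odd (U.relIndex J) := Odd.of_dvd_nat hodd
      ((Subgroup.relIndex_dvd_card U J).trans ⟨_, (mul_comm _ _).trans hJcard |>.symm⟩)
    have h3 : 3 ≤ U.relIndex J := by
      obtain ⟨t, ht⟩ := h1
      omega
    have h4 := sq_mul_le_pow (α := orderOf a) (j := Nat.card J) (d := D)
      hp3 (by nlinarith) ((Subgroup.card_le_of_le le_sup_left).trans hS) h2α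
    rw [hJcard] at h4
    omega
  have h1 : (MulAut.conjNormal h : MulAut A) ∈ Subgroup.zpowers Fr := hU ▸ hJU (hJ ▸ ⟨h, rfl⟩)
  obtain ⟨i, hi⟩ := mem_powers_iff_mem_zpowers.2 h1
  refine ⟨i, ?_⟩
  rw [← hconj, ← hi]
  exact congrArg Subtype.val (hFr i a')

/-- A normal self-centralizing cyclic subgroup `⟨a⟩` of a large group `H` of odd order acting
freely on `V \ {0}` is acted on by conjugation through powers of `x ↦ x ^ p`. Moreover some
irreducible `f`, the minimal polynomial of an eigenvalue of `a`, makes `f(a)` singular. -/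
theorem exists_conj_eq_pow_prime_pow {p : ℕ} [hp : Fact p.Prime] (hp2 : Odd p) {V H : Type*}
    [AddCommGroup V] [Module (ZMod p) V] [Finite V] [Nontrivial V] [Group H] [Finite H]
    (hodd : Odd (Nat.card H)) (ρ : Representation (ZMod p) H V)
    (hfree : ∀ h : H, h ≠ 1 → ∀ v : V, v ≠ 0 → ρ h v ≠ v) (a : H)
    [hn : (Subgroup.zpowers a).Normal] (hself : ∀ h, h * a = a * h → h ∈ Subgroup.zpowers a)
    (hlt : Nat.card V < Nat.card H ^ 2) :
    (∀ h : H, ∃ i : ℕ, h * a * h⁻¹ = a ^ p ^ i) ∧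
      ∃ f : (ZMod p)[X], Irreducible f ∧ ∃ v : V, v ≠ 0 ∧ aeval (ρ a) f v = 0 := by
  let K := AlgebraicClosure (ZMod p)
  have hnt : Nontrivial (K ⊗[ZMod p] V) := by
    apply Module.nontrivial_of_finrank_pos (R := K)
    rw [Module.finrank_baseChange]
    exact Module.finrank_pos
  obtain ⟨ζ, hζ⟩ := Module.End.exists_eigenvalue ((ρ a).baseChange K)
  refine ⟨conj_eq_pow_prime_pow_of_card_le hp.out hp2 hodd a hself ?_
    (card_conjugates_le ρ hfree hζ) ?_, minpoly (ZMod p) ζ, ?_, ?_⟩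
  · have hord := orderOf_eigenvalue ρ hfree hζ
    have : CharP K p := inferInstance
    rw [← hord]
    exact coprime_orderOf_of_charP (hord ▸ orderOf_pos a)
  · rwa [Module.natCard_eq_pow_finrank (K := ZMod p) (V := V), Nat.card_zmod] at hlt
  · exact minpoly.irreducible (Algebra.IsIntegral.isIntegral ζ)
  · exact exists_aeval_apply_eq_zero hζ (minpoly.aeval _ _)
end Multiplier

/-! ### Stable lines for semilinear groups -/

section Semilinear
open Polynomial

/-- Surjectivity of the norm of a finite field onto the fixed field of `σ`. -/
theorem exists_prod_pow_automorphism {p : ℕ} [Fact p.Prime] {F : Type*} [Field F] [Finite F]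
    [Algebra (ZMod p) F] (σ : F ≃ₐ[ZMod p] F) {c : F} (hc : σ c = c) :
    ∃ u : F, ∏ i ∈ Finset.range (orderOf σ), (σ ^ i) u = c := by
  classical
  let U := Subgroup.zpowers σ
  let E := IntermediateField.fixedField U
  have hmem : ∀ x : E, σ x = x := fun x => x.2 ⟨σ, Subgroup.mem_zpowers σ⟩
  have hcE : c ∈ E := by
    rintro ⟨_, n, rfl⟩
    change (σ ^ n) c = c
    have h1 : σ ∈ MulAction.stabilizer (F ≃ₐ[ZMod p] F) c := hc
    exact zpow_mem h1 n
  let σ' : Gal(F/E) := AlgEquiv.ofRingEquiv (f := σ.toRingEquiv) hmem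
  have hpow : ∀ (i : ℕ) (x : F), (σ' ^ i) x = (σ ^ i) x := by
    intro i
    induction i with
    | zero => intro x; rfl
    | succ i ih =>
      intro x
      rw [pow_succ', pow_succ', AlgEquiv.mul_apply, AlgEquiv.mul_apply, ih]
      rfl
  have hgen : ∀ τ : Gal(F/E), ∃ i : ℕ, i < orderOf σ ∧ σ' ^ i = τ := by
    intro τ
    have h1 : τ.restrictScalars (ZMod p) ∈ E.fixingSubgroup := fun x => τ.commutes x
    rw [IntermediateField.fixingSubgroup_fixedField] at h1
    obtain ⟨i, hi, h2⟩ : ∃ i < orderOf σ, σ ^ i = τ.restrictScalars (ZMod p) := by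
      simpa using mem_zpowers_iff_mem_range_orderOf.1 h1
    refine ⟨i, hi, AlgEquiv.ext fun x => ?_⟩
    rw [hpow, h2]
    rfl
  obtain ⟨u, hu⟩ := FiniteField.norm_surjective E F ⟨c, hcE⟩
  refine ⟨u, ?_⟩
  have h1 := Algebra.norm_eq_prod_automorphisms E u
  rw [hu] at h1
  refine Eq.trans ?_ h1.symm
  refine Finset.prod_bij (fun i _ => σ' ^ i) (fun _ _ => Finset.mem_univ _) ?_ ?_ ?_
  · intro i hi j hj hij
    rw [Finset.mem_range] at hi hj
    refine pow_injOn_Iio_orderOf hi hj (AlgEquiv.ext fun x => ?_)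
    change (σ ^ i) x = (σ ^ j) x
    rw [← hpow, ← hpow, hij]
  · intro τ _
    obtain ⟨i, hi, h⟩ := hgen τ
    exact ⟨i, Finset.mem_range.2 hi, h⟩
  · intro i _
    exact (hpow i u).symm

/-- Dedekind's independence of the automorphisms `σ ^ i`, with coefficients `w i` in an `F`-vector
space instead of `F`. -/
theorem exists_sum_pow_apply_ne_zero {R F V : Type*} [CommRing R] [Field F] [Algebra R F]
    [AddCommGroup V] [Module R V] (φ : F →ₐ[R] Module.End R V) (σ : F ≃ₐ[R] F) [Finite F]
    (w : ℕ → V) (hw : w 0 ≠ 0) :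
    ∃ x : F, ∑ i ∈ Finset.range (orderOf σ), φ ((σ ^ i) x) (w i) ≠ 0 := by
  by_contra! h
  let _ : Module F V := Module.compHom V φ.toRingHom
  obtain ⟨l, hl⟩ : ∃ l : Module.Dual F V, l (w 0) ≠ 0 := by
    by_contra! h1
    exact hw ((Module.forall_dual_apply_eq_zero_iff F (w 0)).1 h1)
  have hfin : 0 < orderOf σ := by
    have : Finite (F ≃ₐ[R] F) := Finite.of_injective (fun τ => (τ : F → F)) DFunLike.coe_injective
    exact orderOf_pos σ
  let g : Fin (orderOf σ) → (F →* F) := fun i => ((σ ^ (i : ℕ) : F ≃ₐ[R] F) : F →* F)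
  have hg : Function.Injective g := by
    intro i j hij
    apply Fin.ext
    refine pow_injOn_Iio_orderOf i.2 j.2 (AlgEquiv.ext fun x => ?_)
    exact DFunLike.congr_fun hij x
  have hli := (linearIndependent_monoidHom F F).comp g hg
  rw [Fintype.linearIndependent_iff] at hli
  refine hl (hli (fun i => l (w i)) ?_ ⟨0, hfin⟩)
  funext x
  rw [Finset.sum_apply]
  have h2 := congrArg l (h x)
  rw [map_sum, map_zero, Finset.sum_range] at h2
  rw [Pi.zero_apply, ← h2]
  refine Finset.sum_congr rfl fun i _ => ?_
  have h3 : l ((σ ^ (i : ℕ)) x • w i) = (σ ^ (i : ℕ)) x • l (w i) := map_smul _ _ _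
  exact (mul_comm _ _).trans h3.symm

/-- A `σ`-semilinear map `S` whose power `S ^ m`, with `m` the order of `σ`, is the scalar `c` has
an eigenline. The scalar `c` is fixed by `σ`, hence the norm of some `u`, and `T = u⁻¹ S` satisfies
`T ^ m = 1`. As in Hilbert 90, the sum of the `T`-orbit of a suitable vector is non-zero; it is
fixed by `T`. -/
theorem exists_semilinear_eigenvector {p : ℕ} [Fact p.Prime] {F V : Type*} [Field F] [Finite F]
    [Algebra (ZMod p) F] [AddCommGroup V] [Module (ZMod p) V] [Nontrivial V]
    (φ : F →ₐ[ZMod p] Module.End (ZMod p) V) (σ : F ≃ₐ[ZMod p] F) (S S' : Module.End (ZMod p) V)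
    (hS' : S * S' = 1) (hS : ∀ x, S * φ x = φ (σ x) * S) {c : F} (hc0 : c ≠ 0)
    (hc : S ^ orderOf σ = φ c) : ∃ (u : F) (w : V), w ≠ 0 ∧ S w = φ u w := by
  have hφ : Function.Injective φ := φ.toRingHom.injective
  have hσc : σ c = c := by
    apply hφ
    have h1 := hS c
    rw [← hc, ← pow_succ', pow_succ, hc] at h1
    have h2 := congrArg (· * S') h1
    simpa only [mul_assoc, hS', mul_one] using h2.symm
  obtain ⟨u, hu⟩ := exists_prod_pow_automorphism σ hσc
  have hu0 : u ≠ 0 := by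
    rintro rfl
    apply hc0
    rw [← hu]
    exact Finset.prod_eq_zero (Finset.mem_range.2 (orderOf_pos σ)) (map_zero _)
  let T := φ u⁻¹ * S
  have hT : ∀ x, T * φ x = φ (σ x) * T := fun x => by
    rw [mul_assoc, hS, ← mul_assoc, ← mul_assoc, ← map_mul, ← map_mul, mul_comm]
  have hTpow : ∀ i x, T ^ i * φ x = φ ((σ ^ i) x) * T ^ i := by
    intro i
    induction i with
    | zero => intro x; simp
    | succ i ih =>
      intro x
      rw [pow_succ, mul_assoc, hT, ← mul_assoc, ih, mul_assoc, pow_succ σ, AlgEquiv.mul_apply]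
  have hTS : ∀ i, T ^ i = φ (∏ j ∈ Finset.range i, (σ ^ j) u)⁻¹ * S ^ i := by
    intro i
    induction i with
    | zero => simp
    | succ i ih =>
      have h1 : T ^ i * φ u⁻¹ = φ ((σ ^ i) u)⁻¹ * T ^ i := by rw [hTpow, map_inv₀]
      rw [pow_succ]
      change T ^ i * (φ u⁻¹ * S) = _
      rw [← mul_assoc, h1, ih, Finset.prod_range_succ, mul_inv, map_mul, pow_succ, mul_assoc,
        mul_assoc, ← mul_assoc, ← mul_assoc, ← mul_assoc, ← map_mul, ← map_mul, mul_comm]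
  have hTm : T ^ orderOf σ = 1 := by
    rw [hTS, hu, hc, ← map_mul, inv_mul_cancel₀ hc0, map_one]
  obtain ⟨w0, hw0⟩ := exists_ne (0 : V)
  obtain ⟨x, hx⟩ := exists_sum_pow_apply_ne_zero φ σ (fun i => (T ^ i) w0) (by simpa using hw0)
  have h1 : ∀ i, φ ((σ ^ i) x) ((T ^ i) w0) = (T ^ i) (φ x w0) := fun i =>
    (LinearMap.congr_fun (hTpow i x) w0).symm
  simp only [h1] at hx
  refine ⟨u, _, hx, ?_⟩
  -- the sum of the orbit of `φ x w0` is fixed by `T`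
  have hfix : T (∑ i ∈ Finset.range (orderOf σ), (T ^ i) (φ x w0)) =
      ∑ i ∈ Finset.range (orderOf σ), (T ^ i) (φ x w0) := by
    have h2 : ∀ i, T ((T ^ i) (φ x w0)) = (T ^ (i + 1)) (φ x w0) := fun i => by
      rw [pow_succ']
      rfl
    rw [map_sum]
    simp only [h2]
    have h3 := Finset.sum_range_succ (fun i => (T ^ i) (φ x w0)) (orderOf σ)
    rw [Finset.sum_range_succ', hTm, pow_zero] at h3
    exact add_right_cancel h3
  have h4 := congrArg (φ u) hfix
  rw [← h4]
  change _ = (φ u * (φ u⁻¹ * S)) _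
  rw [← mul_assoc, ← map_mul, mul_inv_cancel₀ hu0, map_one, one_mul]

/-- Since `f` has coefficients in `F_p`, `f(a ^ (p ^ i)) = f(a) ^ (p ^ i)`; so the kernel of `f(a)`
is stable under `H`, and if it is non-zero, irreducibility makes it everything. -/
theorem aeval_eq_zero_of_invariant {p : ℕ} [hp : Fact p.Prime] {V H : Type*}
    [AddCommGroup V] [Module (ZMod p) V] [Group H] (ρ : Representation (ZMod p) H V)
    (hirr : ∀ W : Submodule (ZMod p) V, (∀ h, ∀ w ∈ W, ρ h w ∈ W) → W = ⊥ ∨ W = ⊤) {a : H}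
    (hconj : ∀ h : H, ∃ i : ℕ, h * a * h⁻¹ = a ^ p ^ i) {f : (ZMod p)[X]} {v : V} (hv : v ≠ 0)
    (hf : aeval (ρ a) f v = 0) : aeval (ρ a) f = 0 := by
  have hinv : ∀ h, ∀ w ∈ LinearMap.ker (aeval (ρ a) f), ρ h w ∈ LinearMap.ker (aeval (ρ a) f) := by
    intro h w hw
    rw [LinearMap.mem_ker] at hw ⊢
    obtain ⟨i, hi⟩ := hconj h⁻¹
    have h1 : ρ a * ρ h = ρ h * ρ a ^ p ^ i := by
      have : a * h = h * a ^ p ^ i := by rw [← hi]; group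
      rw [← map_mul, this, map_mul, map_pow]
    have h2 : ∀ g : (ZMod p)[X], aeval (ρ a) g * ρ h = ρ h * aeval (ρ a ^ p ^ i) g := by
      intro g
      have h3 : ∀ n : ℕ, ρ a ^ n * ρ h = ρ h * (ρ a ^ p ^ i) ^ n := fun n => 
        (SemiconjBy.pow_right (show SemiconjBy (ρ h) (ρ a ^ p ^ i) (ρ a) from h1.symm) n).symm
      induction g using Polynomial.induction_on' with
      | add f g hf hg => rw [map_add, map_add, add_mul, mul_add, hf, hg]
      | monomial n c =>
        rw [aeval_monomial, aeval_monomial, mul_assoc, h3, ← mul_assoc, ← mul_assoc,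
          Algebra.commutes]
    have h4 : aeval (ρ a ^ p ^ i) f = aeval (ρ a) f ^ p ^ i := by
      have h5 : ∀ i : ℕ, expand (ZMod p) (p ^ i) f = f ^ p ^ i := by
        intro i
        induction i with
        | zero => simp
        | succ i ih => rw [pow_succ', expand_mul, ih, ZMod.expand_card, ← pow_mul, mul_comm]
      rw [← expand_aeval, h5, map_pow]
    have h6 := LinearMap.congr_fun (h2 f) w
    rw [Module.End.mul_apply, Module.End.mul_apply, h4] at h6
    rw [h6]
    obtain ⟨m, hm⟩ := Nat.exists_eq_succ_of_ne_zero (pow_pos hp.out.pos i).ne'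
    rw [hm, pow_succ, Module.End.mul_apply, hw, map_zero, map_zero]
  rcases hirr _ hinv with h | h
  · exact absurd ((Submodule.eq_bot_iff _).1 h v (LinearMap.mem_ker.2 hf)) hv
  · exact LinearMap.ker_eq_top.1 h
end Semilinear

/-! ### Field structure on a linear group -/

section Linear
open Polynomial

/-- If `F = F_p[a]` is a field, conjugation by `h` acts on it as a power of the Frobenius
automorphism, because it does so on `a`. -/
theorem exists_galoisAction {p : ℕ} [hp : Fact p.Prime] {F V H : Type*} [Field F] [Finite F]
    [Algebra (ZMod p) F] [AddCommGroup V] [Module (ZMod p) V] [Nontrivial V] [Group H]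
    (ρ : Representation (ZMod p) H V) (φ : F →ₐ[ZMod p] Module.End (ZMod p) V) {a : H} {t : F}
    (ht : φ t = ρ a) (hadj : Algebra.adjoin (ZMod p) {t} = ⊤)
    (hconj : ∀ h : H, ∃ i : ℕ, h * a * h⁻¹ = a ^ p ^ i) :
    ∃ s : H →* (F ≃ₐ[ZMod p] F), ∀ h x, ρ h * φ x = φ (s h x) * ρ h := by
  have hφ : Function.Injective φ := φ.toRingHom.injective
  have h1 : ∀ h : H, ∃ σ : F ≃ₐ[ZMod p] F, ∀ x, ρ h * φ x = φ (σ x) * ρ h := by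
    intro h
    obtain ⟨i, hi⟩ := hconj h
    let σ := FiniteField.frobeniusAlgEquivOfAlgebraic (ZMod p) F ^ i
    have hσ : σ t = t ^ p ^ i := by
      change (FiniteField.frobeniusAlgEquivOfAlgebraic (ZMod p) F ^ i) t = _
      rw [AlgEquiv.coe_pow, FiniteField.coe_frobeniusAlgEquivOfAlgebraic_iterate, ZMod.card]
    refine ⟨σ, fun x => ?_⟩
    have hx : x ∈ Algebra.adjoin (ZMod p) {t} := hadj ▸ Algebra.mem_top
    induction hx using Algebra.adjoin_induction with
    | mem x hx =>
      rw [Set.mem_singleton_iff.1 hx, hσ, map_pow, ht, ← map_pow, ← map_mul, ← map_mul, ← hi]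
      congr 1
      group
    | algebraMap r =>
      rw [AlgEquiv.commutes, AlgHom.commutes]
      exact (Algebra.commutes r (ρ h)).symm
    | add x y _ _ hx hy => rw [map_add, map_add, map_add, mul_add, add_mul, hx, hy]
    | mul x y _ _ hx hy =>
      rw [map_mul, map_mul, map_mul, ← mul_assoc, hx, mul_assoc, hy, mul_assoc]
  choose s hs using h1
  refine ⟨MonoidHom.mk' s fun g h => AlgEquiv.ext fun x => hφ ?_, hs⟩
  have h2 : φ (s (g * h) x) * ρ (g * h) = φ (s g (s h x)) * ρ (g * h) := by
    rw [← hs, map_mul, mul_assoc, hs, ← mul_assoc, hs, mul_assoc]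
  have h3 := congrArg (· * ρ (g * h)⁻¹) h2
  simp only [mul_assoc, ← map_mul, mul_inv_cancel, map_one, mul_one] at h3
  exact h3

/-- If `F = F_p[a]` is a field normalized by the irreducible group `H`, and only powers of `a`
centralize it, then `V` is an `F`-line on which `H` acts by maps `t ↦ c σ(t)`. The group `H` is
generated by `a` and an element `b` over a generator of the cyclic image of `H` in the Galois
group, so an eigenline of the semilinear map `b` is stable under `H`, hence all of `V`. -/
theorem exists_field_of_galoisAction {p : ℕ} [hp : Fact p.Prime] {F V H : Type*} [Field F]
    [Finite F] [Algebra (ZMod p) F] [AddCommGroup V] [Module (ZMod p) V] [Nontrivial V] [Group H]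
    [Finite H] (ρ : Representation (ZMod p) H V)
    (hirr : ∀ W : Submodule (ZMod p) V, (∀ h, ∀ w ∈ W, ρ h w ∈ W) → W = ⊥ ∨ W = ⊤)
    (φ : F →ₐ[ZMod p] Module.End (ZMod p) V) {a : H} {t : F} (ht : φ t = ρ a)
    (s : H →* (F ≃ₐ[ZMod p] F)) (hs : ∀ h x, ρ h * φ x = φ (s h x) * ρ h)
    (hker : ∀ h, s h = 1 → h ∈ Subgroup.zpowers a) :
    ∃ e : V ≃+ F, ∀ h : H, ∃ (c : F) (σ : F ≃+* F), c ≠ 0 ∧ ∀ v, e (ρ h v) = c * σ (e v) := by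
  have hinv : ∀ h, ρ h * ρ h⁻¹ = 1 := fun h => by rw [← map_mul, mul_inv_cancel, map_one]
  have hinv' : ∀ h, ρ h⁻¹ * ρ h = 1 := fun h => by rw [← map_mul, inv_mul_cancel, map_one]
  have hne : ∀ h v, v ≠ 0 → ρ h v ≠ 0 := fun h v hv h0 => hv <| by
    have h1 := LinearMap.congr_fun (hinv' h) v
    rw [Module.End.mul_apply, h0, map_zero] at h1
    exact h1.symm
  have ht0 : t ≠ 0 := by
    rintro rfl
    obtain ⟨v, hv⟩ := exists_ne (0 : V)
    apply hne a v hv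
    rw [← ht, map_zero, LinearMap.zero_apply]
  -- The Galois group of a finite field is cyclic, and so is the image of `H` in it.
  obtain ⟨⟨_, b, rfl⟩, hb⟩ := IsCyclic.exists_generator (α := s.range)
  have hgen : ∀ h, ∃ n i : ℕ, h = a ^ n * b ^ i := by
    intro h
    obtain ⟨i, hi⟩ := mem_powers_iff_mem_zpowers.2 (hb ⟨s h, h, rfl⟩)
    have h1 : s b ^ i = s h := congrArg Subtype.val hi
    obtain ⟨n, hn⟩ := mem_powers_iff_mem_zpowers.2 (hker (h * (b ^ i)⁻¹) (by
      rw [map_mul, map_inv, map_pow, h1, mul_inv_cancel]))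
    refine ⟨n, i, ?_⟩
    change a ^ n = _ at hn
    rw [hn, inv_mul_cancel_right]
  obtain ⟨n, hn⟩ := mem_powers_iff_mem_zpowers.2 (hker (b ^ orderOf (s b)) (by
      rw [map_pow, pow_orderOf_eq_one]))
  obtain ⟨u, w, hw, hu⟩ := exists_semilinear_eigenvector φ (s b) (ρ b) (ρ b⁻¹) (hinv b) (hs b)
    (c := t ^ n) (pow_ne_zero _ ht0) (by rw [map_pow, ht, ← map_pow, ← map_pow]; exact congrArg ρ hn.symm)
  -- The elements of `H` that map `w` into its `F`-line are closed under products.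
  have hQmul : ∀ g h : H, (∃ u, ρ g w = φ u w) → (∃ u, ρ h w = φ u w) →
      ∃ u, ρ (g * h) w = φ u w := by
    rintro g h ⟨x, hx⟩ ⟨y, hy⟩
    refine ⟨s g y * x, ?_⟩
    have h1 := LinearMap.congr_fun (hs g y) w
    rw [Module.End.mul_apply, Module.End.mul_apply, hx] at h1
    rw [map_mul, Module.End.mul_apply, hy, h1, map_mul, Module.End.mul_apply]
  have hQone : ∃ u, ρ (1 : H) w = φ u w := ⟨1, by rw [map_one, map_one]⟩
  have hQpow : ∀ (g : H) (i : ℕ), (∃ u, ρ g w = φ u w) → ∃ u, ρ (g ^ i) w = φ u w := by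
    intro g i hg
    induction i with
    | zero => rwa [pow_zero]
    | succ i ih => exact pow_succ g i ▸ hQmul _ _ ih hg
  have hQ : ∀ h : H, ∃ u, ρ h w = φ u w := by
    intro h
    obtain ⟨n, i, rfl⟩ := hgen h
    exact hQmul _ _ (hQpow a n ⟨t, by rw [ht]⟩) (hQpow b i ⟨u, hu⟩)
  choose c hc using hQ
  have hact : ∀ h x, ρ h (φ x w) = φ (c h * s h x) w := by
    intro h x
    have h1 := LinearMap.congr_fun (hs h x) w
    rw [Module.End.mul_apply, Module.End.mul_apply, hc] at h1
    rw [h1, mul_comm, map_mul, Module.End.mul_apply]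
  let L : F →ₗ[ZMod p] V := (LinearMap.applyₗ w).comp φ.toLinearMap
  have hL : ∀ x, L x = φ x w := fun _ => rfl
  have hLinj : Function.Injective L := by
    rw [injective_iff_map_eq_zero]
    intro x hx
    by_contra hx0
    apply hw
    have h1 : φ x⁻¹ (φ x w) = w := by
      rw [← Module.End.mul_apply, ← map_mul, inv_mul_cancel₀ hx0, map_one, Module.End.one_apply]
    rw [← h1, ← hL, hx, map_zero]
  have hLsurj : Function.Surjective L := by
    rw [← LinearMap.range_eq_top]
    refine (hirr (LinearMap.range L) ?_).resolve_left ?_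
    · rintro h _ ⟨x, rfl⟩
      exact ⟨c h * s h x, (hact h x).symm⟩
    · intro h0
      apply hw
      have h1 : L 1 ∈ LinearMap.range L := ⟨1, rfl⟩
      rw [h0, Submodule.mem_bot, hL, map_one] at h1
      exact h1
  let e := LinearEquiv.ofBijective L ⟨hLinj, hLsurj⟩
  refine ⟨e.symm.toAddEquiv, fun h => ⟨c h, (s h).toRingEquiv, ?_, fun v => ?_⟩⟩
  · intro h0
    apply hne h w hw
    rw [hc, h0, map_zero, LinearMap.zero_apply]
  · obtain ⟨x, rfl⟩ := e.surjective v
    change e.symm (ρ h (φ x w)) = c h * s h (e.symm (e x))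
    rw [e.symm_apply_apply, hact]
    exact e.symm_apply_apply _

/-- An irreducible representation of a group `H` of odd order on `V`, over a prime field of odd
characteristic, that is free on `V \ {0}` and satisfies `|V| < |H| ^ 2`, is semilinear over a
field `F` of order `|V|`. The field is `F_p[X] / (f)`, with `f` the minimal polynomial of an
eigenvalue of a generator of a normal self-centralizing cyclic subgroup of `H`. -/
theorem exists_field_of_free_representation {p : ℕ} [hp : Fact p.Prime] (hp2 : Odd p)
    {V H : Type*} [AddCommGroup V] [Module (ZMod p) V] [Finite V] [Nontrivial V] [Group H]
    [Finite H] (hodd : Odd (Nat.card H)) (ρ : Representation (ZMod p) H V)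
    (hfree : ∀ h : H, h ≠ 1 → ∀ v : V, v ≠ 0 → ρ h v ≠ v)
    (hirr : ∀ W : Submodule (ZMod p) V, (∀ h, ∀ w ∈ W, ρ h w ∈ W) → W = ⊥ ∨ W = ⊤)
    (hlt : Nat.card V < Nat.card H ^ 2) :
    ∃ (F : Type) (_ : Field F) (_ : Fintype F) (e : V ≃+ F), ∀ h : H,
      ∃ (c : F) (σ : F ≃+* F), c ≠ 0 ∧ ∀ v, e (ρ h v) = c * σ (e v) := by
  obtain ⟨a, hn, hself⟩ := exists_selfCentralizing_zpowers hodd fun E hE => by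
    let _ : CommGroup E := { mul_comm := fun x y => Subtype.ext (hE x x.2 y y.2) }
    refine isCyclic_of_free_representation (ρ.comp E.subtype) fun g hg v hv => ?_
    exact hfree g (fun h => hg (Subtype.ext h)) v hv
  obtain ⟨hconj, f, hf, v, hv, hfv⟩ :=
    exists_conj_eq_pow_prime_pow hp2 hodd ρ hfree a hself hlt
  have hfa := aeval_eq_zero_of_invariant ρ hirr hconj hv hfv
  have : Fact (Irreducible f) := ⟨hf⟩
  let φ : AdjoinRoot f →ₐ[ZMod p] Module.End (ZMod p) V :=
    Ideal.Quotient.liftₐ _ (aeval (ρ a)) fun g hg => by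
      obtain ⟨q, rfl⟩ := Ideal.mem_span_singleton.1 hg
      rw [map_mul, hfa, zero_mul]
  have ht : φ (AdjoinRoot.root f) = ρ a := aeval_X (ρ a)
  have hfin : Finite (AdjoinRoot f) :=
    have := (AdjoinRoot.powerBasis hf.ne_zero).finite
    Module.finite_of_finite (ZMod p)
  obtain ⟨s, hs⟩ := exists_galoisAction ρ φ ht AdjoinRoot.adjoinRoot_eq_top hconj
  refine ⟨AdjoinRoot f, inferInstance, Fintype.ofFinite _,
    exists_field_of_galoisAction ρ hirr φ ht s hs fun h hh => hself h ?_⟩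
  have h1 := hs h (AdjoinRoot.root f)
  rw [hh, AlgEquiv.one_apply, ht, ← map_mul, ← map_mul] at h1
  by_contra hne
  -- An `h` acting trivially on `F` commutes with `ρ a`, and `ρ` is faithful because it is free.
  refine hfree ((a * h)⁻¹ * (h * a)) (fun h2 => hne (inv_mul_eq_one.1 h2).symm) v hv ?_
  rw [map_mul, h1, ← map_mul, inv_mul_cancel, map_one, Module.End.one_apply]
end Linear

/-! ### Field structure on the Frobenius kernel -/

section Affine

/-- The Frobenius kernel acts regularly on the points. -/
theorem kernel_smul_bijective {G X : Type*} [Group G] [MulAction G X] [Finite X]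
    {K : Subgroup G} (hKcard : Nat.card K = Nat.card X)
    (hKmem : ∀ g : G, g ∈ K ↔ g = 1 ∨ ∀ x : X, g • x ≠ x) (z : X) :
    Function.Bijective fun v : K => (v : G) • z := by
  refine (Nat.bijective_iff_injective_and_card _).2 ⟨fun v w hvw => ?_, hKcard⟩
  have h1 : (v : G)⁻¹ * w ∈ K := K.mul_mem (K.inv_mem v.2) w.2
  rcases (hKmem _).1 h1 with h | h
  · exact Subtype.ext (inv_mul_eq_one.1 h)
  · exact absurd ((by rw [mul_smul, inv_smul_eq_iff]; exact hvw.symm : ((v : G)⁻¹ * w) • z = z)) (h z)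

/-- Let the kernel `K` be elementary abelian and have no proper subgroup normalized by `G_z`.
Identify `v ∈ K` with the point `v • z`. Every `g ∈ G` is `w * h` with `w ∈ K` and `h ∈ G_z`; here
`h` acts on `K` by conjugation, as `t ↦ c σ(t)` in field coordinates, and `w` as a translation. -/
theorem exists_field_of_elementary_abelian_kernel {G X : Type*} [Group G] [Finite G]
    [MulAction G X] [Finite X] [Nontrivial X] {p : ℕ} [hp : Fact p.Prime] (hp2 : Odd p)
    {K : Subgroup G} [hKn : K.Normal] (hKcard : Nat.card K = Nat.card X)
    (hKmem : ∀ g : G, g ∈ K ↔ g = 1 ∨ ∀ x : X, g • x ≠ x)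
    (hfrob : ∀ g : G, g ≠ 1 → ∀ x y : X, g • x = x → g • y = y → x = y)
    (hcomm : ∀ a ∈ K, ∀ b ∈ K, a * b = b * a) (hexp : ∀ a ∈ K, a ^ p = 1) (z : X)
    (hmin : ∀ S : Subgroup G, S ≤ K →
      (∀ h ∈ MulAction.stabilizer G z, ∀ s ∈ S, h * s * h⁻¹ ∈ S) → S = ⊥ ∨ S = K)
    (hodd : Odd (Nat.card (MulAction.stabilizer G z)))
    (hlt : Nat.card X < Nat.card (MulAction.stabilizer G z) ^ 2) :
    ∃ (F : Type) (_ : Field F) (_ : Fintype F) (e : X ≃ F), ∀ g : G,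
      ∃ (a b : F) (σ : F ≃+* F), a ≠ 0 ∧ ∀ x : X, e (g • x) = a * σ (e x) + b := by
  let _ : CommGroup K := { mul_comm := fun x y => Subtype.ext (hcomm x x.2 y y.2) }
  let _ : Module (ZMod p) (Additive K) := AddCommGroup.zmodModule (n := p) fun x =>
    congrArg Additive.ofMul (Subtype.ext (hexp x.toMul x.toMul.2) : x.toMul ^ p = 1)
  let ρ : Representation (ZMod p) (MulAction.stabilizer G z) (Additive K) :=
    { toFun := fun h => AddMonoidHom.toZModLinearMap p
        (MonoidHom.toAdditive (MulAut.conjNormal (h : G) : MulAut K).toMonoidHom)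
      map_one' := by
        ext v
        change (1 : G) * v.toMul * 1⁻¹ = v.toMul
        group
      map_mul' := fun g h => by
        ext v
        change (g * h : G) * v.toMul * (g * h : G)⁻¹ = g * (h * v.toMul * (h : G)⁻¹) * (g : G)⁻¹
        group }
  have hρ : ∀ h v, ((ρ h v).toMul : G) = h * (v.toMul : G) * (h : G)⁻¹ := fun _ _ => rfl
  have hbij := kernel_smul_bijective hKcard hKmem z
  have hcard : Nat.card (Additive K) = Nat.card X := hKcard
  let b : Additive K ≃ X := Additive.toMul.trans (Equiv.ofBijective _ hbij)
  have hb : ∀ v, b v = (v.toMul : G) • z := fun _ => rfl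
  have hnt : Nontrivial (Additive K) := b.nontrivial
  obtain ⟨F, hF, hFf, e, he⟩ := exists_field_of_free_representation hp2 hodd ρ
    (fun h h1 v hv hfix => hv (b.injective (by
      have h2 : (h : G) * v.toMul * (h : G)⁻¹ = v.toMul := congrArg (fun w => (w.toMul : G)) hfix
      have h3 : (h : G) • (v.toMul : G) • z = (v.toMul : G) • z := by
        have hz : (h : G) • z = z := h.2
        rw [← mul_smul, mul_inv_eq_iff_eq_mul.1 h2, mul_smul, hz]
      have h4 := hfrob h (fun e => h1 (Subtype.ext e)) _ _ h3 h.2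
      exact h4.trans (one_smul G z).symm)))
    (fun W hW => by
      have h1 := hmin ((AddSubgroup.toSubgroup' W.toAddSubgroup).map K.subtype)
        (Subgroup.map_subtype_le _) (by
          rintro h hh _ ⟨s, hs, rfl⟩
          exact ⟨_, hW ⟨h, hh⟩ (Additive.ofMul s) hs, rfl⟩)
      refine h1.imp (fun h2 => ?_) (fun h2 => ?_)
      · refine (Submodule.eq_bot_iff _).2 fun w hw => ?_
        have h3 : (w.toMul : G) ∈ (⊥ : Subgroup G) := h2 ▸ ⟨w.toMul, hw, rfl⟩
        exact congrArg Additive.ofMul (Subtype.ext (Subgroup.mem_bot.1 h3) : w.toMul = 1)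
      · refine Submodule.eq_top_iff'.2 fun w => ?_
        obtain ⟨s, hs, h3⟩ := h2.ge w.toMul.2
        obtain rfl : s = w.toMul := Subtype.ext h3
        exact hs)
    (hcard ▸ hlt)
  refine ⟨F, hF, hFf, b.symm.trans e.toEquiv, fun g => ?_⟩
  obtain ⟨w, hw⟩ := b.surjective (g • z)
  have hst : (w.toMul : G)⁻¹ * g ∈ MulAction.stabilizer G z := by
    rw [MulAction.mem_stabilizer_iff, mul_smul, inv_smul_eq_iff]
    exact hw.symm
  obtain ⟨c, σ, hc, h1⟩ := he ⟨_, hst⟩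
  refine ⟨c, e w, σ, hc, fun x => ?_⟩
  obtain ⟨v, rfl⟩ := b.surjective x
  have h2 : g • b v = b (ρ ⟨_, hst⟩ v + w) := by
    rw [add_comm, hb, hb, toMul_add, Subgroup.coe_mul, hρ, mul_smul, mul_smul, mul_smul]
    have h3 : ((w.toMul : G)⁻¹ * g)⁻¹ • z = z := inv_mem hst
    rw [h3, mul_smul, smul_inv_smul]
  change e (b.symm (g • b v)) = c * σ (e (b.symm (b v))) + e w
  rw [h2, b.symm_apply_apply, b.symm_apply_apply, map_add, h1]
end Affine

/-! ### The semilinear structure on points -/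

section SemilinearStructure
variable {P : Type*} [Fintype P] [DecidableEq P]
/-- The number of points is a power of an odd prime, and `G` acts by maps `t ↦ a σ(t) + b` over a
field of that order. -/
theorem semilinear_structure {𝓑 : Finset (Finset P)} {v k lam : ℕ}
    (hD : IsDesign 𝓑 v k lam) (hsym : 𝓑.card = v)
    {G : Subgroup (Equiv.Perm P)} (hAut : IsAutGroup G 𝓑)
    (hflag : IsFlagTransitive G 𝓑)
    (htrans : MulAction.IsPretransitive G P)
    (hnonreg : ∃ g : G, g ≠ 1 ∧ ∃ x : P, g • x = x)
    (hfrob : ∀ g : G, g ≠ 1 → ∀ x y : P, g • x = x → g • y = y → x = y) :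
    ∃ (p d : ℕ) (F : Type) (hf : Field F) (hft : Fintype F),
      p.Prime ∧ Odd p ∧ v = p ^ d ∧ @Fintype.card F hft = v ∧
      @ActsSemilinearlyOn P G F hf := by
  have hkv := dvd_sub_one hD hsym hAut hflag htrans hnonreg hfrob
  have hlt := hD.lt_sq hsym hkv
  have hkodd := odd_blockSize hD hsym hAut hflag htrans hnonreg hfrob
  have hst := card_stabilizer_eq hD hsym hAut hflag htrans hnonreg hfrob
  have hPv : Nat.card P = v := by rw [Nat.card_eq_fintype_card, hD.card_points]
  have hk2 := hD.two_lt_k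
  have hkv' := hD.k_lt_v
  have hv1 : 1 < Fintype.card P := by rw [hD.card_points]; omega
  have hnt : Nontrivial P := Fintype.one_lt_card_iff_nontrivial.1 hv1
  have harith : ∀ c, c ∣ Nat.card P → k ∣ c - 1 → c = 1 ∨ c = Nat.card P := fun c hc hkc =>
    eq_one_or_eq_of_dvd (by rwa [hPv]) (by rw [hPv]; nlinarith) Nat.card_pos hc hkc
  have hcop : (Nat.card P).Coprime k := by
    rw [hPv]
    obtain ⟨m, hm⟩ := hkv
    have h1 : v = 1 + k * m := by omega
    rw [h1]
    exact (Nat.coprime_add_mul_left_left 1 k m).2 (Nat.coprime_one_left k)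
  obtain ⟨K, hKn, hKcard, hKmem⟩ := exists_frobeniusKernel hfrob
  obtain ⟨p, d, hp, hpd, hcomm, hexp⟩ := kernel_elementary_abelian (by omega) hKcard hKmem hfrob
    hst hcop hnt harith
  have : Fact p.Prime := ⟨hp⟩
  obtain ⟨z⟩ : Nonempty P := inferInstance
  have hp2 : Odd p := by
    refine hp.odd_of_ne_two ?_
    rintro rfl
    refine not_transitive_involutions hD hsym hAut hflag htrans hnonreg hfrob fun x y => ?_
    obtain ⟨t, ht⟩ := (kernel_smul_bijective hKcard hKmem x).2 y
    refine ⟨t, ht, ?_⟩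
    have h1 : (t : G) * t = 1 := by rw [← pow_two]; exact hexp t t.2
    rw [← ht, ← mul_smul, h1, one_smul]
  obtain ⟨F, hF, hFf, e, he⟩ := exists_field_of_elementary_abelian_kernel hp2 hKcard hKmem hfrob
    hcomm hexp z (fun S hS h => eq_bot_or_eq_kernel hKcard hKmem hfrob hst harith hS z h)
    (by rwa [hst]) (by rwa [hst, hPv])
  refine ⟨p, d, F, hF, hFf, hp, hp2, by rw [← hPv, hpd], ?_, e, he⟩
  rw [← Fintype.card_congr e, hD.card_points]
end SemilinearStructure

/-- **Proposition 5.2.** If a Frobenius permutation group `G` acts flag-transitively on a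
symmetric design, then `G` has odd order, is point- and block-primitive and flag-regular,
`G ≤ AΓL₁(v)` with `v` an odd prime power, and for every block `B` there is a point
`x ∉ B` with `G_B = G_x`. -/
theorem stmt_12 (𝓑 : Finset (Finset P)) (v k lam : ℕ)
    (hD : IsDesign 𝓑 v k lam) (hsym : 𝓑.card = v)
    (G : Subgroup (Equiv.Perm P)) (hAut : IsAutGroup G 𝓑)
    (hflag : IsFlagTransitive G 𝓑)
    (htrans : MulAction.IsPretransitive G P)
    (hnonreg : ∃ g : G, g ≠ 1 ∧ ∃ x : P, g • x = x)
    (hfrob : ∀ g : G, g ≠ 1 → ∀ x y : P, g • x = x → g • y = y → x = y) :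
    Odd (Nat.card G) ∧
    IsPrimitiveAction G P ∧
    (∃ ψ : G →* Equiv.Perm 𝓑,
      (∀ (g : G) (C : 𝓑), (ψ g C : Finset P) = g • (C : Finset P)) ∧
      IsPrimitiveAction ψ.range 𝓑) ∧
    (Nat.card G = v * k ∧
      ∀ B₁ ∈ 𝓑, ∀ B₂ ∈ 𝓑, ∀ x₁ ∈ B₁, ∀ x₂ ∈ B₂,
        ∃! g : G, g • x₁ = x₂ ∧ g • B₁ = B₂) ∧
    (∃ (p d : ℕ) (F : Type) (hf : Field F) (hft : Fintype F),
      p.Prime ∧ Odd p ∧ v = p ^ d ∧ @Fintype.card F hft = v ∧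
      @ActsSemilinearlyOn P G F hf) ∧
    (∀ B ∈ 𝓑, ∃ x : P, x ∉ B ∧
      MulAction.stabilizer G B = MulAction.stabilizer G x) := by
  refine ⟨?_, point_primitive hD hsym hAut hflag htrans hnonreg hfrob,
    block_primitive hD hsym hAut hflag htrans hnonreg hfrob,
    ⟨card_group_eq hD hsym hAut hflag htrans hnonreg hfrob,
      flag_regular hD hsym hAut hflag htrans hnonreg hfrob⟩,
    semilinear_structure hD hsym hAut hflag htrans hnonreg hfrob,
    fun B hB => exists_point_of_block hD hsym hAut hflag htrans hnonreg hfrob hB⟩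
  -- `|G| = v k`, where `v` is a power of an odd prime and `k` is odd.
  rw [card_group_eq hD hsym hAut hflag htrans hnonreg hfrob]
  obtain ⟨p, d, F, hF, hFt, -, hp2, hv, -⟩ :=
    semilinear_structure hD hsym hAut hflag htrans hnonreg hfrob
  exact (hv ▸ hp2.pow).mul (odd_blockSize hD hsym hAut hflag htrans hnonreg hfrob)
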